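/- Let k/2 < ℓ < k with ℓ dividing n, let H be a k-uniform hypergraph on [n] with m edges and density p = m/binom(n,k), and let ε = ε(n) satisfy ε < 1 and ε^5 n^{1/2} p² / log³n → ∞. Suppose that H satisfies properties P_a, P_b, P_c, P_d, P_e, P_f with parameter ε. Then H contains a collection of at least (1 − 2ε^{1/3}) m/ν_ℓ pairwise edge-disjoint type ℓ Hamilton cycles, where ν_ℓ = n/ℓ. -/

import Mathlib

open Finset Filter

/-- The edges of the type-`ℓ` Hamilton cycle in a `k`-uniform hypergraph on `Fin n`
induced by a cyclic ordering `f : ZMod n ≃ Fin n`: the `i`-th edge consists of the `k`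
consecutive vertices in positions `iℓ, iℓ+1, …, iℓ+k-1` (cyclically). -/
def typeCycleEdges (n k ℓ : ℕ) (f : ZMod n ≃ Fin n) : Finset (Finset (Fin n)) :=
  (Finset.range (n / ℓ)).image fun i =>
    (Finset.range k).image fun j => f ((i * ℓ + j : ℕ) : ZMod n)

/-- `C` is a type-`ℓ` Hamilton cycle of the `k`-uniform hypergraph `H` on `Fin n`:
a collection of `n/ℓ` edges of `H` which, for some cyclic ordering of the vertices, are
exactly the sets of `k` consecutive vertices starting at the positions divisible by `ℓ`
(so consecutive edges `E_{i-1}, E_i` satisfy `|E_{i-1} ∖ E_i| = ℓ`). -/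
def IsTypeHamCycle (n k ℓ : ℕ) (H C : Finset (Finset (Fin n))) : Prop :=
  C ⊆ H ∧ C.card = n / ℓ ∧ ∃ f : ZMod n ≃ Fin n, C = typeCycleEdges n k ℓ f

/-- `H` contains at least `t` pairwise edge-disjoint type-`ℓ` Hamilton cycles. -/
def HamPackingGE (n k ℓ : ℕ) (H : Finset (Finset (Fin n))) (t : ℝ) : Prop :=
  ∃ 𝒞 : Finset (Finset (Finset (Fin n))),
    t ≤ (𝒞.card : ℝ) ∧ (∀ C ∈ 𝒞, IsTypeHamCycle n k ℓ H C) ∧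
    (𝒞 : Set (Finset (Finset (Fin n)))).Pairwise Disjoint

open scoped Classical in
/-- The neighbourhood `N_H(S)` of `S` in a `k`-uniform hypergraph `H` on `Fin n`:
the `(k - |S|)`-sets `Y` with `S ∪ Y ∈ H`. -/
def hNbhd (n k : ℕ) (H : Finset (Finset (Fin n))) (S : Finset (Fin n)) :
    Finset (Finset (Fin n)) :=
  Finset.univ.filter fun Y => Y.card = k - S.card ∧ S ∪ Y ∈ H

/-- The degree `d_H(S) = |N_H(S)|`. -/
def hDeg (n k : ℕ) (H : Finset (Finset (Fin n))) (S : Finset (Fin n)) : ℕ :=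
  (hNbhd n k H S).card


/-- Ore's condition gives an `r`-factor. -/
theorem ore_factor {α β : Type*} [Fintype α] [Fintype β] [DecidableEq α] [DecidableEq β]
    (hαβ : Fintype.card α = Fintype.card β)
    (G : Finset (α × β)) (r : ℕ)
    (hore : ∀ (K : Finset α) (L : Finset β),
      r * (K.card + L.card) ≤ (G.filter fun e => e.1 ∈ K ∧ e.2 ∈ L).card + r * Fintype.card α) :
    ∃ F ⊆ G, (∀ x, (F.filter fun e => e.1 = x).card = r) ∧
      (∀ y, (F.filter fun e => e.2 = y).card = r) := by
  classical
  -- degrees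
  set dA : α → ℕ := fun x => (G.filter fun e => e.1 = x).card with hdA
  set dB : β → ℕ := fun y => (G.filter fun e => e.2 = y).card with hdB
  have hsumA : ∀ U : Finset α, ∑ x ∈ U, dA x = (G.filter fun e => e.1 ∈ U).card := by
    intro U
    rw [Finset.card_eq_sum_card_fiberwise (f := fun e => e.1) (t := U)]
    · refine Finset.sum_congr rfl fun x hx => ?_
      simp only [hdA]
      congr 1
      ext e
      simp only [mem_filter]
      constructor
      · rintro ⟨h1, h2⟩; exact ⟨⟨h1, h2 ▸ hx⟩, h2⟩
      · rintro ⟨⟨h1, _⟩, h2⟩; exact ⟨h1, h2⟩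
    · intro e he; simpa using (by simpa using he : e ∈ G ∧ e.1 ∈ U).2
  have hsumB : ∀ U : Finset β, ∑ x ∈ U, dB x = (G.filter fun e => e.2 ∈ U).card := by
    intro U
    rw [Finset.card_eq_sum_card_fiberwise (f := fun e => e.2) (t := U)]
    · refine Finset.sum_congr rfl fun x hx => ?_
      simp only [hdB]
      congr 1
      ext e
      simp only [mem_filter]
      constructor
      · rintro ⟨h1, h2⟩; exact ⟨⟨h1, h2 ▸ hx⟩, h2⟩
      · rintro ⟨⟨h1, _⟩, h2⟩; exact ⟨h1, h2⟩
    · intro e he; simpa using (by simpa using he : e ∈ G ∧ e.2 ∈ U).2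
  have hrA : ∀ x, r ≤ dA x := by
    intro x
    have := hore {x} univ
    simp only [card_singleton, card_univ, ← hαβ, mem_singleton, mem_univ, and_true] at this
    simp only [hdA]; nlinarith
  have hrB : ∀ x, r ≤ dB x := by
    intro x
    have := hore univ {x}
    simp only [card_singleton, card_univ, mem_singleton, mem_univ, true_and] at this
    simp only [hdB]; nlinarith
  -- gadget
  let X := (G : Type _) ⊕ (Σ y : β, Fin (dB y - r))
  let Y := (G : Type _) ⊕ (Σ x : α, Fin (dA x - r))
  let t : X → Finset Y := fun z => match z with
    | Sum.inl e => univ.filter fun w => match w with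
        | Sum.inl e' => e' = e
        | Sum.inr s => s.1 = e.1.1
    | Sum.inr s => univ.filter fun w => match w with
        | Sum.inl e' => e'.1.2 = s.1
        | Sum.inr _ => False
  have hall : ∀ Z : Finset X, Z.card ≤ (Z.biUnion t).card := by
    intro Z
    set F := Z.toLeft with hF
    set S := Z.toRight with hS
    set T := Z.biUnion t with hT
    rw [← Finset.card_toLeft_add_card_toRight (u := Z), ← Finset.card_toLeft_add_card_toRight (u := T)]
    set W : Finset β := S.image Sigma.fst with hW
    set U : Finset α := F.image (fun e => e.1.1) with hU
    have hS1 : S.card ≤ ∑ y ∈ W, (dB y - r) := by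
      have : S ⊆ W.sigma (fun _ => univ) := by
        intro s hs
        simp only [mem_sigma, mem_univ, and_true, hW]
        exact mem_image_of_mem _ hs
      refine (card_le_card this).trans ?_
      rw [card_sigma]; simp
    have hTr : ∑ x ∈ U, (dA x - r) ≤ T.toRight.card := by
      have : U.sigma (fun x => (univ : Finset (Fin (dA x - r)))) ⊆ T.toRight := by
        intro s hs
        simp only [mem_sigma, mem_univ, and_true, hU, mem_image] at hs
        obtain ⟨e, he, hes⟩ := hs
        rw [mem_toRight, hT, mem_biUnion]
        refine ⟨Sum.inl e, by simpa [hF] using he, ?_⟩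
        simp only [t, mem_filter, mem_univ, true_and]
        exact hes.symm
      refine le_trans ?_ (card_le_card this)
      rw [card_sigma]; simp
    set E' : Finset G := univ.filter fun e => e.1.2 ∈ W ∧ e.1.1 ∉ U with hE'
    have hTl : F.card + E'.card ≤ T.toLeft.card := by
      rw [← card_union_of_disjoint]
      · refine card_le_card ?_
        intro e he
        rw [mem_toLeft, hT, mem_biUnion]
        rcases mem_union.1 he with he | he
        · refine ⟨Sum.inl e, by simpa [hF] using he, ?_⟩
          simp only [t, mem_filter, mem_univ, true_and]
        · simp only [hE', mem_filter, mem_univ, true_and, hW, mem_image] at he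
          obtain ⟨⟨s, hs, hse⟩, _⟩ := he
          refine ⟨Sum.inr s, by simpa [hS] using hs, ?_⟩
          simp only [t, mem_filter, mem_univ, true_and]
          exact hse.symm
      · rw [Finset.disjoint_left]
        intro e he he'
        simp only [hE', mem_filter, mem_univ, true_and] at he'
        exact he'.2 (mem_image_of_mem _ he)
    have hE'card : E'.card = (G.filter fun e => e.2 ∈ W ∧ e.1 ∉ U).card := by
      refine Finset.card_bij (fun e _ => e.1) ?_ ?_ ?_
      · intro e he; simp only [hE', mem_filter, mem_univ, true_and] at he
        simp only [mem_filter]; exact ⟨e.2, he⟩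
      · intro e _ e' _ h; exact Subtype.ext h
      · intro e he; simp only [mem_filter] at he
        exact ⟨⟨e, he.1⟩, by simp only [hE', mem_filter, mem_univ, true_and]; exact he.2, rfl⟩
    have hA2 : ∑ x ∈ U, (dA x - r) + r * U.card = (G.filter fun e => e.1 ∈ U).card := by
      rw [← hsumA U, mul_comm, ← smul_eq_mul, ← Finset.sum_const, ← Finset.sum_add_distrib]
      exact Finset.sum_congr rfl fun x _ => Nat.sub_add_cancel (hrA x)
    have hB2 : ∑ x ∈ W, (dB x - r) + r * W.card = (G.filter fun e => e.2 ∈ W).card := by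
      rw [← hsumB W, mul_comm, ← smul_eq_mul, ← Finset.sum_const, ← Finset.sum_add_distrib]
      exact Finset.sum_congr rfl fun x _ => Nat.sub_add_cancel (hrB x)
    have hA3 := Finset.card_filter_add_card_filter_not (s := G.filter fun e => e.1 ∈ U)
      (fun e => e.2 ∈ W)
    have hB3 := Finset.card_filter_add_card_filter_not (s := G.filter fun e => e.2 ∈ W)
      (fun e => e.1 ∈ U)
    rw [filter_filter, filter_filter] at hA3 hB3
    have hcomm : (G.filter fun e => e.2 ∈ W ∧ e.1 ∈ U) = (G.filter fun e => e.1 ∈ U ∧ e.2 ∈ W) := by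
      simp only [and_comm]
    rw [hcomm] at hB3
    have hO := hore U Wᶜ
    simp only [mem_compl] at hO
    have hWc : W.card + Wᶜ.card = Fintype.card α := by rw [hαβ]; exact card_add_card_compl W
    have : r * (U.card + Wᶜ.card) + r * W.card = r * U.card + r * Fintype.card α := by
      rw [← hWc]; ring
    have e1 : Z.toLeft.card = F.card := rfl
    have e2 : Z.toRight.card = S.card := rfl
    omega
  obtain ⟨m, hminj, hm⟩ := (Finset.all_card_le_biUnion_card_iff_exists_injective t).1 hall
  have hcard : Fintype.card X = Fintype.card Y := by
    have hA2 : ∑ x, (dA x - r) + r * Fintype.card α = G.card := by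
      have := hsumA univ
      simp only [mem_univ, filter_true] at this
      rw [← this, mul_comm, ← smul_eq_mul, ← card_univ, ← Finset.sum_const, ← Finset.sum_add_distrib]
      exact Finset.sum_congr rfl fun x _ => Nat.sub_add_cancel (hrA x)
    have hB2 : ∑ x, (dB x - r) + r * Fintype.card β = G.card := by
      have := hsumB univ
      simp only [mem_univ, filter_true] at this
      rw [← this, mul_comm, ← smul_eq_mul, ← card_univ, ← Finset.sum_const, ← Finset.sum_add_distrib]
      exact Finset.sum_congr rfl fun x _ => Nat.sub_add_cancel (hrB x)
    simp only [X, Y, Fintype.card_sum, Fintype.card_sigma, Fintype.card_fin]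
    rw [← hαβ] at hB2
    omega
  have hmbij : Function.Bijective m :=
    (Fintype.bijective_iff_injective_and_card m).2 ⟨hminj, hcard⟩
  have hmslack : ∀ s : (Σ y : β, Fin (dB y - r)), ∃ e : G, m (Sum.inr s) = Sum.inl e ∧ e.1.2 = s.1 := by
    intro s
    have := hm (Sum.inr s)
    simp only [t, mem_filter, mem_univ, true_and] at this
    rcases h : m (Sum.inr s) with e | s'
    · rw [h] at this; exact ⟨e, rfl, this⟩
    · rw [h] at this; exact this.elim
  have hmedge : ∀ e : G, m (Sum.inl e) = Sum.inl e ∨ ∃ s, m (Sum.inl e) = Sum.inr s ∧ s.1 = e.1.1 := by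
    intro e
    have := hm (Sum.inl e)
    simp only [t, mem_filter, mem_univ, true_and] at this
    rcases h : m (Sum.inl e) with e' | s'
    · rw [h] at this; left; rw [this]
    · rw [h] at this; right; exact ⟨s', rfl, this⟩
  refine ⟨G.filter fun e => ∃ h : e ∈ G, m (Sum.inl ⟨e, h⟩) = Sum.inl ⟨e, h⟩, filter_subset _ _, ?_, ?_⟩
  · intro x
    -- the complement in the star of x is in bijection with the slack
    have h1 : ((G.filter fun e => e.1 = x).filter fun e =>
        ¬ ∃ h : e ∈ G, m (Sum.inl ⟨e, h⟩) = Sum.inl ⟨e, h⟩).card = dA x - r := by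
      rw [← Fintype.card_fin (dA x - r), ← card_univ]
      symm
      have hsurj : ∀ c : Fin (dA x - r), ∃ e : G, m (Sum.inl e) = Sum.inr ⟨x, c⟩ := by
        intro c
        obtain ⟨z, hz⟩ := hmbij.2 (Sum.inr ⟨x, c⟩)
        rcases z with e | s
        · exact ⟨e, hz⟩
        · obtain ⟨e, he, _⟩ := hmslack s
          rw [he] at hz; cases hz
      choose φ hφ using hsurj
      refine Finset.card_bij (fun c _ => (φ c).1) ?_ ?_ ?_
      · intro c _
        simp only [mem_filter]
        refine ⟨⟨(φ c).2, ?_⟩, ?_⟩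
        · rcases hmedge (φ c) with h | ⟨s, hs, hs'⟩
          · rw [hφ c] at h; cases h
          · rw [hφ c] at hs
            have := Sum.inr.inj hs
            rw [← hs', ← this]
        · rintro ⟨h, h'⟩
          have : (⟨(φ c).1, h⟩ : G) = φ c := rfl
          rw [this, hφ c] at h'; cases h'
      · intro c _ c' _ h
        have h' : φ c = φ c' := Subtype.ext h
        have := hφ c
        rw [h', hφ c'] at this
        simpa using Sum.inr.inj this.symm
      · intro e he
        simp only [mem_filter] at he
        obtain ⟨⟨heG, hex⟩, hne⟩ := he
        rcases hmedge ⟨e, heG⟩ with h | ⟨⟨x', c⟩, hs, hs'⟩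
        · exact (hne ⟨heG, h⟩).elim
        · simp only at hs'
          have hxx : x' = x := by rw [hs', hex]
          subst hxx
          refine ⟨c, mem_univ _, ?_⟩
          have := hminj ((hφ c).trans hs.symm)
          have := Sum.inl.inj this
          rw [this]
    have h2 := Finset.card_filter_add_card_filter_not (s := G.filter fun e => e.1 = x)
      (fun e => ∃ h : e ∈ G, m (Sum.inl ⟨e, h⟩) = Sum.inl ⟨e, h⟩)
    rw [h1] at h2
    have h3 := hrA x
    rw [filter_filter] at h2 ⊢
    simp only [and_comm (a := ∃ _, _)]
    have : (G.filter fun e => e.1 = x).card = dA x := rfl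
    omega
  · intro y
    have h1 : ((G.filter fun e => e.2 = y).filter fun e =>
        ¬ ∃ h : e ∈ G, m (Sum.inl ⟨e, h⟩) = Sum.inl ⟨e, h⟩).card = dB y - r := by
      rw [← Fintype.card_fin (dB y - r), ← card_univ]
      symm
      have hsurj : ∀ c : Fin (dB y - r), ∃ e : G, m (Sum.inr ⟨y, c⟩) = Sum.inl e ∧ e.1.2 = y :=
        fun c => hmslack ⟨y, c⟩
      choose φ hφ hφ2 using hsurj
      refine Finset.card_bij (fun c _ => (φ c).1) ?_ ?_ ?_
      · intro c _
        simp only [mem_filter]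
        refine ⟨⟨(φ c).2, hφ2 c⟩, ?_⟩
        rintro ⟨h, h'⟩
        have := hminj ((hφ c).trans h'.symm)
        cases this
      · intro c _ c' _ h
        have h' : φ c = φ c' := Subtype.ext h
        have := hφ c
        rw [h', ← hφ c'] at this
        simpa using Sum.inr.inj (hminj this)
      · intro e he
        simp only [mem_filter] at he
        obtain ⟨⟨heG, hex⟩, hne⟩ := he
        obtain ⟨z, hz⟩ := hmbij.2 (Sum.inl ⟨e, heG⟩)
        rcases z with e' | ⟨y', c⟩
        · rcases hmedge e' with h | ⟨s, hs, hs'⟩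
          · rw [hz] at h
            have := Sum.inl.inj h
            subst this
            exact (hne ⟨heG, hz⟩).elim
          · rw [hz] at hs; cases hs
        · obtain ⟨e', he', hy'⟩ := hmslack ⟨y', c⟩
          rw [hz] at he'
          have := Sum.inl.inj he'
          subst this
          simp only at hy'
          have hyy : y' = y := by rw [← hy', hex]
          subst hyy
          refine ⟨c, mem_univ _, ?_⟩
          have := (hφ c).symm.trans hz
          have := Sum.inl.inj this
          rw [this]
    have h2 := Finset.card_filter_add_card_filter_not (s := G.filter fun e => e.2 = y)
      (fun e => ∃ h : e ∈ G, m (Sum.inl ⟨e, h⟩) = Sum.inl ⟨e, h⟩)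
    rw [h1] at h2
    have h3 := hrB y
    rw [filter_filter] at h2 ⊢
    simp only [and_comm (a := ∃ _, _)]
    have : (G.filter fun e => e.2 = y).card = dB y := rfl
    omega

/-- A regular bipartite graph decomposes into perfect matchings. -/
theorem regular_matchings {α β : Type*} [Fintype α] [Fintype β] [DecidableEq α] [DecidableEq β]
    (hαβ : Fintype.card α = Fintype.card β) (r : ℕ) :
    ∀ F : Finset (α × β), (∀ x, (F.filter fun e => e.1 = x).card = r) →
      (∀ y, (F.filter fun e => e.2 = y).card = r) →
      ∃ π : Fin r → (α ≃ β), (∀ s x, (x, π s x) ∈ F) ∧ ∀ s s' x, π s x = π s' x → s = s' := by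
  classical
  induction r with
  | zero => intro F _ _; exact ⟨fun s => s.elim0, fun s => s.elim0, fun s => s.elim0⟩
  | succ r ih =>
    intro F hA hB
    have hall : ∀ K : Finset α, K.card ≤
        (K.biUnion fun x => univ.filter fun y => (x, y) ∈ F).card := by
      intro K
      set L := K.biUnion fun x => univ.filter fun y => (x, y) ∈ F with hL
      have h1 : (F.filter fun e => e.1 ∈ K).card = K.card * (r + 1) := by
        rw [Finset.card_eq_sum_card_fiberwise (f := fun e => e.1) (t := K)]
        · rw [← smul_eq_mul, ← Finset.sum_const]
          refine Finset.sum_congr rfl fun x hx => ?_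
          rw [← hA x, filter_filter]
          congr 1
          ext e
          simp only [mem_filter]
          constructor
          · rintro ⟨h1, _, h2⟩; exact ⟨h1, h2⟩
          · rintro ⟨h1, h2⟩; exact ⟨h1, h2 ▸ hx, h2⟩
        · intro e he; simpa using (by simpa using he : e ∈ F ∧ e.1 ∈ K).2
      have h2 : (F.filter fun e => e.2 ∈ L).card = L.card * (r + 1) := by
        rw [Finset.card_eq_sum_card_fiberwise (f := fun e => e.2) (t := L)]
        · rw [← smul_eq_mul, ← Finset.sum_const]
          refine Finset.sum_congr rfl fun x hx => ?_
          rw [← hB x, filter_filter]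
          congr 1
          ext e
          simp only [mem_filter]
          constructor
          · rintro ⟨h1, _, h2⟩; exact ⟨h1, h2⟩
          · rintro ⟨h1, h2⟩; exact ⟨h1, h2 ▸ hx, h2⟩
        · intro e he; simpa using (by simpa using he : e ∈ F ∧ e.2 ∈ L).2
      have h3 : (F.filter fun e => e.1 ∈ K) ⊆ (F.filter fun e => e.2 ∈ L) := by
        intro e he
        simp only [mem_filter] at he ⊢
        refine ⟨he.1, ?_⟩
        simp only [hL, mem_biUnion, mem_filter, mem_univ, true_and]
        exact ⟨e.1, he.2, he.1⟩
      have h4 := card_le_card h3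
      rw [h1, h2] at h4
      exact Nat.le_of_mul_le_mul_right h4 (Nat.succ_pos r)
    obtain ⟨m, hminj, hm⟩ := (Finset.all_card_le_biUnion_card_iff_exists_injective _).1 hall
    simp only [mem_filter, mem_univ, true_and] at hm
    let μ : α ≃ β := Equiv.ofBijective m ((Fintype.bijective_iff_injective_and_card m).2 ⟨hminj, hαβ⟩)
    have hμ : ∀ x, (x, μ x) ∈ F := hm
    obtain ⟨π, hπ, hπ2⟩ := ih (F.filter fun e => e.2 ≠ μ e.1) (by
      intro x
      have h1 : (F.filter fun e => e.1 = x) = insert (x, μ x)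
          ((F.filter fun e => e.2 ≠ μ e.1).filter fun e => e.1 = x) := by
        ext ⟨e1, e2⟩
        simp only [mem_filter, mem_insert, Prod.mk.injEq]
        constructor
        · rintro ⟨h1, rfl⟩
          by_cases h : e2 = μ e1
          · left; exact ⟨rfl, h⟩
          · right; exact ⟨⟨h1, h⟩, rfl⟩
        · rintro (⟨rfl, rfl⟩ | ⟨⟨h1, h2⟩, rfl⟩)
          · exact ⟨hμ _, rfl⟩
          · exact ⟨h1, rfl⟩
      have h2 := hA x
      rw [h1, card_insert_of_notMem] at h2
      · omega
      · simp) (by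
      intro y
      have h1 : (F.filter fun e => e.2 = y) = insert (μ.symm y, y)
          ((F.filter fun e => e.2 ≠ μ e.1).filter fun e => e.2 = y) := by
        ext ⟨e1, e2⟩
        simp only [mem_filter, mem_insert, Prod.mk.injEq]
        constructor
        · rintro ⟨h1, rfl⟩
          by_cases h : e2 = μ e1
          · left; exact ⟨by rw [h]; simp, rfl⟩
          · right; exact ⟨⟨h1, h⟩, rfl⟩
        · rintro (⟨rfl, rfl⟩ | ⟨⟨h1, h2⟩, rfl⟩)
          · refine ⟨?_, rfl⟩
            have := hμ (μ.symm e2)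
            simpa using this
          · exact ⟨h1, rfl⟩
      have h2 := hB y
      rw [h1, card_insert_of_notMem] at h2
      · omega
      · simp)
    refine ⟨Fin.cons μ π, ?_, ?_⟩
    · intro s x
      refine Fin.cases ?_ (fun s => ?_) s
      · simpa using hμ x
      · simpa using (mem_filter.1 (hπ s x)).1
    · intro s s' x
      refine Fin.cases ?_ (fun s => ?_) s <;> refine Fin.cases ?_ (fun s' => ?_) s'
      · simp
      · intro h
        simp only [Fin.cons_zero, Fin.cons_succ] at h
        exact absurd h.symm (mem_filter.1 (hπ s' x)).2
      · intro h
        simp only [Fin.cons_zero, Fin.cons_succ] at h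
        exact absurd h (mem_filter.1 (hπ s x)).2
      · intro h
        simp only [Fin.cons_succ] at h
        rw [hπ2 s s' x h]


theorem ore_arith (ν x y u : ℝ) (hν : 0 ≤ ν) (hx : 0 ≤ x) (hxν : x ≤ ν) (hy : 0 ≤ y)
    (hy2 : 2 * y ≤ ν) (hu : 0 ≤ u) (hu2 : u ≤ 1 / 2) :
    (1 - 1.9 * u) * ν * (x - y) ≤ x * (ν - y) - x * u * (0.646 * ν + 0.6 * (ν - y)) := by
  have h0 : 0 ≤ y * (ν - x) := mul_nonneg hy (by linarith)
  have h1 : 0 ≤ 0.05 * ν * y + 0.327 * ν * x - 0.7 * x * y := by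
    have a1 : 0 ≤ x * (ν - 2 * y) := mul_nonneg hx (by linarith)
    have a2 : 0 ≤ y * (ν - x) := h0
    nlinarith
  nlinarith [mul_nonneg (by linarith : (0:ℝ) ≤ 1 - 2 * u) h0, mul_nonneg hu h1]

set_option maxHeartbeats 1000000 in
set_option linter.unusedSimpArgs false in
theorem ore_side {α β : Type*} [Fintype α] [Fintype β] [DecidableEq α] [DecidableEq β]
    (G : Finset (α × β)) (ν : ℕ) (hα : Fintype.card α = ν) (hβ : Fintype.card β = ν)
    (q u η : ℝ) (hu : 0 < u) (hu2 : u ≤ 1 / 2) (hη : 0 ≤ η) (hηu : η ≤ 1.01 * u ^ 3)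
    (hq : 0 < q) (hbig : 1 ≤ 0.07 * u ^ 4 * q ^ 2 * ν)
    (hdeg : ∀ x : α, (1 - η) * q * ν ≤ ((univ.filter fun y : β => (x, y) ∈ G).card : ℝ))
    (hcod : ∀ x x' : α, x ≠ x' →
      ((univ.filter fun y : β => (x, y) ∈ G ∧ (x', y) ∈ G).card : ℝ) ≤ (1 + η) * q ^ 2 * ν)
    (K : Finset α) (L : Finset β) (hKL : K.card ≤ L.card) (hν : ν ≤ K.card + L.card) :
    (1 - 1.9 * u) * q * ν * ((K.card : ℝ) + L.card - ν) ≤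
      ((G.filter fun e => e.1 ∈ K ∧ e.2 ∈ L).card : ℝ) := by
  classical
  set f : α → β → ℝ := fun x y => if (x, y) ∈ G then 1 else 0 with hf
  have he : ((G.filter fun e => e.1 ∈ K ∧ e.2 ∈ L).card : ℝ) = ∑ x ∈ K, ∑ y ∈ L, f x y := by
    rw [← Finset.sum_product']
    simp only [hf]
    rw [Finset.sum_boole]
    congr 2
    ext e
    simp only [mem_filter, mem_product]
    tauto
  have hd : ∀ x, ((univ.filter fun y : β => (x, y) ∈ G).card : ℝ) = ∑ y, f x y := by
    intro x; simp only [hf]; rw [Finset.sum_boole]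
  have hc : ∀ x x', ((univ.filter fun y : β => (x, y) ∈ G ∧ (x', y) ∈ G).card : ℝ)
      = ∑ y, f x y * f x' y := by
    intro x x'; simp only [hf]; rw [← Finset.sum_boole]
    refine Finset.sum_congr rfl fun y _ => ?_
    by_cases h1 : (x, y) ∈ G <;> by_cases h2 : (x', y) ∈ G <;> simp [h1, h2]
  have hff : ∀ x y, f x y * f x y = f x y := by
    intro x y; by_cases h1 : (x, y) ∈ G <;> simp [hf, h1]
  have hf0 : ∀ x y, 0 ≤ f x y := by
    intro x y; by_cases h1 : (x, y) ∈ G <;> simp [hf, h1]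
  have hf1 : ∀ x y, f x y ≤ 1 := by
    intro x y; by_cases h1 : (x, y) ∈ G <;> simp [hf, h1]
  simp only [hd, hc] at hdeg hcod
  rw [he]
  have hLν : L.card ≤ ν := by rw [← hβ]; exact card_le_univ L
  have hKν : K.card ≤ ν := by rw [← hα]; exact card_le_univ K
  set x : ℝ := (K.card : ℝ) with hx
  set z : ℝ := (L.card : ℝ) with hz
  set N : ℝ := (ν : ℝ) with hN
  have hx0 : 0 ≤ x := by positivity
  have hxz : x ≤ z := by simp only [hx, hz, hN]; exact_mod_cast hKL
  have hzN : z ≤ N := by simp only [hx, hz, hN]; exact_mod_cast hLν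
  have hxN : x ≤ N := by simp only [hx, hz, hN]; exact_mod_cast hKν
  have hxzN : N ≤ x + z := by simp only [hx, hz, hN]; exact_mod_cast hν
  have hN0 : 0 ≤ N := by positivity
  have hqN : 0 ≤ q * N := by positivity
  have hu3 : u ^ 3 ≤ u / 4 := by nlinarith [mul_pos hu hu]
  by_cases hcase : x ≤ u * q * N
  · -- small set
    have h1 : ∀ a ∈ K, (1 - η) * q * N - (N - z) ≤ ∑ y ∈ L, f a y := by
      intro a _
      have h2 := hdeg a
      rw [← Finset.sum_add_sum_compl L] at h2
      have h3 : ∑ y ∈ Lᶜ, f a y ≤ N - z := by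
        refine (Finset.sum_le_sum fun y _ => hf1 a y).trans ?_
        rw [Finset.sum_const, Finset.card_compl, hβ, nsmul_eq_mul, mul_one, Nat.cast_sub hLν]
      linarith
    have h2 := Finset.sum_le_sum h1
    rw [Finset.sum_const, nsmul_eq_mul, ← hx] at h2
    refine le_trans ?_ h2
    have h3 : (1 - 1.9 * u) * q * N ≤ (1 - η) * q * N - (N - z) := by
      have : N - z ≤ u * q * N := by linarith
      have : (η + u) * (q * N) ≤ (1.9 * u) * (q * N) :=
        mul_le_mul_of_nonneg_right (by linarith) hqN
      nlinarith
    have h4 : 0 ≤ (1 - 1.9 * u) * q * N := by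
      have : 0 ≤ (1 - 1.9 * u) := by linarith
      positivity
    calc (1 - 1.9 * u) * q * N * (x + z - N) ≤ (1 - 1.9 * u) * q * N * x :=
          mul_le_mul_of_nonneg_left (by linarith) h4
      _ = x * ((1 - 1.9 * u) * q * N) := by ring
      _ ≤ _ := mul_le_mul_of_nonneg_left h3 hx0
  · push Not at hcase
    have hxpos : 0 < x := lt_of_le_of_lt (by positivity) hcase
    -- x q ≥ large
    have hxq : 1 ≤ 0.07 * u ^ 3 * (x * q) := by
      have : u * q * N * (0.07 * u ^ 3 * q) ≤ x * (0.07 * u ^ 3 * q) :=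
        mul_le_mul_of_nonneg_right hcase.le (by positivity)
      nlinarith
    have hxq1 : 1 ≤ 2 * (x * q) := by
      have : 0 ≤ x * q := by positivity
      nlinarith
    set D : β → ℝ := fun y => ∑ a ∈ K, f a y with hD
    set S : ℝ := ∑ a ∈ K, ∑ y, f a y with hS
    have hSlow : x * ((1 - η) * q * N) ≤ S := by
      have := Finset.sum_le_sum (s := K) fun a _ => hdeg a
      rwa [Finset.sum_const, nsmul_eq_mul] at this
    have hDsum : ∑ y, D y = S := by
      simp only [hD, hS]; rw [Finset.sum_comm]
    have hD2 : ∑ y, D y ^ 2 ≤ S + x ^ 2 * ((1 + η) * q ^ 2 * N) := by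
      have h1 : ∑ y, D y ^ 2 = ∑ a ∈ K, ∑ a' ∈ K, ∑ y, f a y * f a' y := by
        simp only [hD, sq, Finset.sum_mul_sum]
        rw [Finset.sum_comm]
        refine Finset.sum_congr rfl fun a _ => ?_
        rw [Finset.sum_comm]
      rw [h1]
      have h2 : ∀ a ∈ K, ∑ a' ∈ K, ∑ y, f a y * f a' y ≤
          ∑ y, f a y + x * ((1 + η) * q ^ 2 * N) := by
        intro a ha
        rw [← Finset.add_sum_erase K _ ha]
        have h3 : ∑ y, f a y * f a y = ∑ y, f a y := Finset.sum_congr rfl fun y _ => hff a y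
        rw [h3]
        have h4 : ∑ a' ∈ K.erase a, ∑ y, f a y * f a' y ≤
            ∑ a' ∈ K.erase a, (1 + η) * q ^ 2 * N := by
          refine Finset.sum_le_sum fun a' ha' => hcod a a' ?_
          exact (Finset.ne_of_mem_erase ha').symm
        rw [Finset.sum_const, nsmul_eq_mul] at h4
        have h5 : ((K.erase a).card : ℝ) ≤ x := by
          simp only [hx]; exact_mod_cast Finset.card_le_card (Finset.erase_subset a K)
        have h6 : 0 ≤ (1 + η) * q ^ 2 * N := by positivity
        have := mul_le_mul_of_nonneg_right h5 h6
        linarith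
      refine (Finset.sum_le_sum h2).trans ?_
      rw [Finset.sum_add_distrib, Finset.sum_const, nsmul_eq_mul, ← hx]
      apply le_of_eq; ring
    set V : ℝ := ∑ y, (D y - x * q) ^ 2 with hV
    have hVle : V ≤ 3.1 * u ^ 3 * (x * q) ^ 2 * N := by
      have h1 : V = ∑ y, D y ^ 2 - 2 * (x * q) * S + N * (x * q) ^ 2 := by
        have : ∀ y, (D y - x * q) ^ 2 = D y ^ 2 - 2 * (x * q) * D y + (x * q) ^ 2 := by
          intro y; ring
        simp only [hV, this]
        rw [Finset.sum_add_distrib, Finset.sum_sub_distrib, ← Finset.mul_sum, hDsum,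
          Finset.sum_const, nsmul_eq_mul, card_univ, hβ]
      have h2 : S * (1 - 2 * (x * q)) ≤ x * ((1 - η) * q * N) * (1 - 2 * (x * q)) :=
        mul_le_mul_of_nonpos_right hSlow (by linarith)
      have h3 : x * ((1 - η) * q * N) ≤ x * q * N * (0.07 * u ^ 3 * (x * q)) := by
        have : x * ((1 - η) * q * N) ≤ x * q * N := by
          have : 0 ≤ x * q * N * η := by positivity
          nlinarith
        have h' : x * q * N * 1 ≤ x * q * N * (0.07 * u ^ 3 * (x * q)) :=
          mul_le_mul_of_nonneg_left hxq (by positivity)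
        linarith
      have h4 : η * ((x * q) ^ 2 * N) ≤ 1.01 * u ^ 3 * ((x * q) ^ 2 * N) :=
        mul_le_mul_of_nonneg_right hηu (by positivity)
      rw [h1]
      linarith
    set s : ℝ := 1.2 * u * (x * q) with hs
    have hspos : 0 < s := by positivity
    have hpt : ∀ y, x * q - D y ≤ (D y - x * q) ^ 2 / (2 * s) + s / 2 := by
      intro y
      have : (D y - x * q) ^ 2 / (2 * s) + s / 2 - (x * q - D y)
          = ((D y - x * q) + s) ^ 2 / (2 * s) := by
        field_simp; ring
      have h2 : 0 ≤ ((D y - x * q) + s) ^ 2 / (2 * s) := by positivity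
      linarith
    have hsum := Finset.sum_le_sum (s := L) fun y _ => hpt y
    rw [Finset.sum_sub_distrib, Finset.sum_add_distrib, Finset.sum_const, Finset.sum_const,
      nsmul_eq_mul, nsmul_eq_mul, ← Finset.sum_div, ← hz] at hsum
    have hVL : ∑ y ∈ L, (D y - x * q) ^ 2 ≤ V :=
      Finset.sum_le_sum_of_subset_of_nonneg (Finset.subset_univ L) (fun y _ _ => sq_nonneg _)
    have hVs : (∑ y ∈ L, (D y - x * q) ^ 2) / (2 * s) ≤ (x * q) * u * (0.646 * N) := by
      rw [div_le_iff₀ (by positivity)]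
      have h1 : 3.1 * u ^ 3 * (x * q) ^ 2 * N ≤ 1.55 * u ^ 2 * (x * q) ^ 2 * N := by
        have := mul_le_mul_of_nonneg_left hu2 (by positivity : 0 ≤ u ^ 2 * (x * q) ^ 2 * N)
        linarith
      have h2 : 0 ≤ u ^ 2 * (x * q) ^ 2 * N := by positivity
      rw [hs]
      linarith
    have hDe : ∑ y ∈ L, D y = ∑ a ∈ K, ∑ y ∈ L, f a y := by
      simp only [hD]; rw [Finset.sum_comm]
    rw [← hDe]
    have har := ore_arith N x (N - z) u hN0 hx0 hxN (by linarith) (by linarith) hu.le hu2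
    have har2 := mul_le_mul_of_nonneg_left har hq.le
    have h9 : z * (x * q) - ∑ y ∈ L, D y ≤ (x * q) * u * (0.646 * N) + z * (s / 2) := by linarith
    rw [hs] at h9
    linarith

theorem ore_both {α β : Type*} [Fintype α] [Fintype β] [DecidableEq α] [DecidableEq β]
    (G : Finset (α × β)) (ν : ℕ) (hα : Fintype.card α = ν) (hβ : Fintype.card β = ν)
    (q u η : ℝ) (hu : 0 < u) (hu2 : u ≤ 1 / 2) (hη : 0 ≤ η) (hηu : η ≤ 1.01 * u ^ 3)
    (hq : 0 < q) (hbig : 1 ≤ 0.07 * u ^ 4 * q ^ 2 * ν)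
    (hdeg : ∀ x : α, (1 - η) * q * ν ≤ ((univ.filter fun y : β => (x, y) ∈ G).card : ℝ))
    (hcod : ∀ x x' : α, x ≠ x' →
      ((univ.filter fun y : β => (x, y) ∈ G ∧ (x', y) ∈ G).card : ℝ) ≤ (1 + η) * q ^ 2 * ν)
    (hdeg' : ∀ y : β, (1 - η) * q * ν ≤ ((univ.filter fun x : α => (x, y) ∈ G).card : ℝ))
    (hcod' : ∀ y y' : β, y ≠ y' →
      ((univ.filter fun x : α => (x, y) ∈ G ∧ (x, y') ∈ G).card : ℝ) ≤ (1 + η) * q ^ 2 * ν)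
    (r : ℕ) (hr : (r : ℝ) ≤ (1 - 1.9 * u) * q * ν)
    (K : Finset α) (L : Finset β) :
    r * (K.card + L.card) ≤ (G.filter fun e => e.1 ∈ K ∧ e.2 ∈ L).card + r * Fintype.card α := by
  classical
  rw [hα]
  by_cases hν : K.card + L.card ≤ ν
  · exact (Nat.mul_le_mul_left r hν).trans (Nat.le_add_left _ _)
  push Not at hν
  have key : (1 - 1.9 * u) * q * ν * ((K.card : ℝ) + L.card - ν) ≤
      ((G.filter fun e => e.1 ∈ K ∧ e.2 ∈ L).card : ℝ) := by
    rcases le_total K.card L.card with h | h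
    · exact ore_side G ν hα hβ q u η hu hu2 hη hηu hq hbig hdeg hcod K L h hν.le
    · have h1 := ore_side (G.map (Equiv.prodComm α β).toEmbedding) ν hβ hα q u η hu hu2 hη hηu hq hbig
        (by
          intro y
          refine (hdeg' y).trans (le_of_eq ?_)
          congr 2
          ext x
          simp [Finset.mem_map_equiv])
        (by
          intro y y' hy
          refine (le_of_eq ?_).trans (hcod' y y' hy)
          congr 2
          ext x
          simp [Finset.mem_map_equiv]) L K h (by omega)
      rw [show (K.card : ℝ) + L.card - ν = L.card + K.card - ν by ring]
      refine h1.trans (le_of_eq ?_)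
      congr 1
      refine Finset.card_bij (fun e _ => (e.2, e.1)) ?_ ?_ ?_
      · rintro ⟨e1, e2⟩ he
        simp [Finset.mem_map_equiv] at he ⊢
        tauto
      · rintro ⟨e1, e2⟩ _ ⟨f1, f2⟩ _ h
        simp at h ⊢; tauto
      · rintro ⟨e1, e2⟩ he
        refine ⟨(e2, e1), ?_, rfl⟩
        simp [Finset.mem_map_equiv] at he ⊢
        tauto
  have h2 : (r : ℝ) * ((K.card : ℝ) + L.card - ν) ≤
      ((G.filter fun e => e.1 ∈ K ∧ e.2 ∈ L).card : ℝ) := by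
    refine le_trans (mul_le_mul_of_nonneg_right hr ?_) key
    have : (ν : ℝ) ≤ K.card + L.card := by exact_mod_cast hν.le
    linarith
  have h3 : (r : ℝ) * ((K.card : ℝ) + L.card) ≤
      ((G.filter fun e => e.1 ∈ K ∧ e.2 ∈ L).card : ℝ) + r * ν := by linarith
  exact_mod_cast h3


theorem hoeff_step {ι : Type*} [Fintype ι] (X : ι → ℝ) (c s : ℝ) (hc : 0 < c)
    (hX : ∑ i, X i = 0) (hb : ∀ i, |X i| ≤ c) :
    ∑ i, Real.exp (s * X i) ≤ Fintype.card ι * Real.exp (s ^ 2 * c ^ 2 / 2) := by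
  have h1 : ∀ i, Real.exp (s * X i) ≤ Real.cosh (s * c) + X i / c * Real.sinh (s * c) := by
    intro i
    have h := abs_le.1 (hb i)
    have hxc : -1 ≤ X i / c ∧ X i / c ≤ 1 := by
      constructor
      · rw [le_div_iff₀ hc]; linarith
      · rw [div_le_iff₀ hc]; linarith
    have := convexOn_exp.2 (Set.mem_univ (s * c)) (Set.mem_univ (-(s * c)))
      (by linarith : 0 ≤ (1 + X i / c) / 2) (by linarith : 0 ≤ (1 - X i / c) / 2) (by ring)
    simp only [smul_eq_mul] at this
    have e : (1 + X i / c) / 2 * (s * c) + (1 - X i / c) / 2 * -(s * c) = s * X i := by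
      field_simp; ring
    rw [e] at this
    rw [Real.cosh_eq, Real.sinh_eq]
    linarith
  refine (Finset.sum_le_sum fun i _ => h1 i).trans ?_
  rw [Finset.sum_add_distrib, ← Finset.sum_mul, ← Finset.sum_div, hX, Finset.sum_const, card_univ,
    nsmul_eq_mul]
  simp only [zero_div, zero_mul, add_zero]
  refine mul_le_mul_of_nonneg_left ?_ (by positivity)
  have := Real.cosh_le_exp_half_sq (s * c)
  rwa [mul_pow] at this

theorem decomp_swap {n : ℕ} (p : Fin (n + 1)) (x y : Fin n) (e : Equiv.Perm (Fin n)) :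
    Equiv.Perm.decomposeFin.symm (p, Equiv.swap x y * e) =
      Equiv.swap (Equiv.swap 0 p x.succ) (Equiv.swap 0 p y.succ) *
        Equiv.Perm.decomposeFin.symm (p, e) := by
  have hinj : Function.Injective (fun z : Fin n => Equiv.swap 0 p z.succ) :=
    (Equiv.injective _).comp (Fin.succ_injective n)
  ext z
  refine Fin.cases ?_ (fun z => ?_) z
  · have h : ∀ x : Fin n, p ≠ Equiv.swap 0 p x.succ := by
      intro x h
      have h2 : Equiv.swap 0 p 0 = Equiv.swap 0 p x.succ := by rw [← h, Equiv.swap_apply_left]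
      exact (Fin.succ_ne_zero x) ((Equiv.injective _ h2).symm)
    simp only [Equiv.Perm.mul_apply, Equiv.Perm.decomposeFin_symm_apply_zero]
    rw [Equiv.swap_apply_of_ne_of_ne (h x) (h y)]
  · simp only [Equiv.Perm.mul_apply, Equiv.Perm.decomposeFin_symm_apply_succ]
    rw [hinj.swap_apply x y (e z)]

theorem perm_mgf (c s : ℝ) (hc : 0 < c) : ∀ (n : ℕ) (f : Equiv.Perm (Fin n) → ℝ),
    (∀ σ x y, |f (Equiv.swap x y * σ) - f σ| ≤ c) →
    ∑ σ, Real.exp (s * (f σ - (∑ τ, f τ) / n.factorial)) ≤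
      n.factorial * Real.exp (n * (s ^ 2 * c ^ 2 / 2)) := by
  intro n
  induction n with
  | zero =>
    intro f _
    simp
  | succ n ih =>
    intro f hf
    set D := (Equiv.Perm.decomposeFin (n := n)).symm with hD
    set g : Fin (n + 1) → Equiv.Perm (Fin n) → ℝ := fun p e => f (D (p, e)) with hg
    have hgl : ∀ p σ x y, |g p (Equiv.swap x y * σ) - g p σ| ≤ c := by
      intro p σ x y
      simp only [hg, hD]
      rw [decomp_swap]
      exact hf _ _ _
    set M : Fin (n + 1) → ℝ := fun p => (∑ e, g p e) / n.factorial with hM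
    set μ : ℝ := (∑ τ, f τ) / (n + 1).factorial with hμ
    have hfac : (0 : ℝ) < n.factorial := by positivity
    have hsum : ∀ F : Equiv.Perm (Fin (n + 1)) → ℝ, ∑ σ, F σ = ∑ p, ∑ e, F (D (p, e)) := by
      intro F
      rw [← Equiv.sum_comp D F, Fintype.sum_prod_type]
    have hμM : ∑ p, M p = (n + 1) * μ := by
      simp only [hM, hμ, hg]
      rw [← Finset.sum_div, hsum f, Nat.factorial_succ]
      push_cast
      field_simp
    have hMM : ∀ p r, |M p - M r| ≤ c := by
      intro p r
      have hφ : ∃ φ : Equiv.Perm (Fin n) → Equiv.Perm (Fin n), Function.Bijective φ ∧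
          ∀ e, D (p, φ e) = Equiv.swap p r * D (r, e) := by
        have hk : ∀ e, D (p, (D.symm (Equiv.swap p r * D (r, e))).2) = Equiv.swap p r * D (r, e) := by
          intro e
          have h1 : D (D.symm (Equiv.swap p r * D (r, e))) = Equiv.swap p r * D (r, e) :=
            Equiv.apply_symm_apply _ _
          have h2 : (D.symm (Equiv.swap p r * D (r, e))).1 = p := by
            have h3 := Equiv.Perm.decomposeFin_symm_apply_zero
              (D.symm (Equiv.swap p r * D (r, e))).1 (D.symm (Equiv.swap p r * D (r, e))).2
            rw [Prod.mk.eta, ← hD, h1, Equiv.Perm.mul_apply, hD,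
              Equiv.Perm.decomposeFin_symm_apply_zero, Equiv.swap_apply_right] at h3
            exact h3.symm
          conv_rhs => rw [← h1]
          congr 1
          exact Prod.ext h2.symm rfl
        refine ⟨fun e => (D.symm (Equiv.swap p r * D (r, e))).2, ?_, hk⟩
        refine (Finite.injective_iff_bijective).1 ?_
        intro e e' h
        have h1 := hk e
        simp only at h
        rw [h, hk e'] at h1
        have h2 := D.injective (mul_left_cancel h1)
        exact (Prod.mk.inj h2).2.symm
      obtain ⟨φ, hφb, hφ⟩ := hφ
      have h1 : ∑ e, g p e = ∑ e, g p (φ e) := (hφb.sum_comp (g p)).symm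
      simp only [hM]
      rw [h1, ← sub_div, ← Finset.sum_sub_distrib, abs_div, abs_of_pos hfac, div_le_iff₀ hfac]
      refine (Finset.abs_sum_le_sum_abs _ _).trans ?_
      have : ∀ e ∈ (univ : Finset (Equiv.Perm (Fin n))), |g p (φ e) - g r e| ≤ c := by
        intro e _
        simp only [hg, hφ]
        exact hf _ _ _
      refine (Finset.sum_le_sum this).trans ?_
      rw [Finset.sum_const, nsmul_eq_mul, card_univ, Fintype.card_perm, Fintype.card_fin, mul_comm]
    have hMμ : ∀ p, |M p - μ| ≤ c := by
      intro p
      have e : M p - μ = (∑ r, (M p - M r)) / (n + 1) := by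
        rw [Finset.sum_sub_distrib, hμM, Finset.sum_const, card_univ, Fintype.card_fin,
          nsmul_eq_mul]
        push_cast
        have : (n : ℝ) + 1 ≠ 0 := by positivity
        field_simp
      have hn : (0 : ℝ) < n + 1 := by positivity
      rw [e, abs_div, abs_of_pos hn, div_le_iff₀ hn]
      refine (Finset.abs_sum_le_sum_abs _ _).trans ?_
      refine (Finset.sum_le_sum fun r _ => hMM p r).trans ?_
      rw [Finset.sum_const, nsmul_eq_mul, card_univ, Fintype.card_fin, mul_comm]
      push_cast; exact le_rfl
    rw [hsum]
    have hstep : ∀ p, ∑ e, Real.exp (s * (f (D (p, e)) - μ)) ≤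
        (n.factorial * Real.exp (n * (s ^ 2 * c ^ 2 / 2))) * Real.exp (s * (M p - μ)) := by
      intro p
      have h := mul_le_mul_of_nonneg_right (ih (g p) (hgl p)) (Real.exp_pos (s * (M p - μ))).le
      refine le_trans (le_of_eq ?_) h
      rw [Finset.sum_mul]
      refine Finset.sum_congr rfl fun e _ => ?_
      rw [← Real.exp_add]
      congr 1
      simp only [hM, hg]; ring
    refine (Finset.sum_le_sum fun p _ => hstep p).trans ?_
    rw [← Finset.mul_sum]
    have h := hoeff_step (fun p => M p - μ) c s hc (by
      rw [Finset.sum_sub_distrib, hμM, Finset.sum_const, card_univ, Fintype.card_fin, nsmul_eq_mul]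
      push_cast; ring) hMμ
    refine (mul_le_mul_of_nonneg_left h (by positivity)).trans (le_of_eq ?_)
    rw [Fintype.card_fin, Nat.factorial_succ]
    push_cast
    rw [add_mul (n:ℝ) 1 (s ^ 2 * c ^ 2 / 2), Real.exp_add, one_mul]
    ring

theorem perm_tail (n : ℕ) (hn : 0 < n) (c τ : ℝ) (hc : 0 < c) (hτ : 0 ≤ τ)
    (f : Equiv.Perm (Fin n) → ℝ)
    (hf : ∀ σ x y, |f (Equiv.swap x y * σ) - f σ| ≤ c) :
    ((univ.filter fun σ => (∑ τ, f τ) / n.factorial + τ ≤ f σ).card : ℝ) ≤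
      n.factorial * Real.exp (-(τ ^ 2 / (2 * n * c ^ 2))) := by
  set μ := (∑ τ, f τ) / (n.factorial : ℝ) with hμ
  have hn' : (0 : ℝ) < n := by exact_mod_cast hn
  set s := τ / (n * c ^ 2) with hs
  have hs0 : 0 ≤ s := by positivity
  have h := perm_mgf c s hc n f hf
  have h1 : ((univ.filter fun σ => μ + τ ≤ f σ).card : ℝ) * Real.exp (s * τ) ≤
      ∑ σ, Real.exp (s * (f σ - μ)) := by
    rw [← nsmul_eq_mul, ← Finset.sum_const]
    refine le_trans (Finset.sum_le_sum (g := fun σ => Real.exp (s * (f σ - μ))) ?_)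
      (Finset.sum_le_sum_of_subset_of_nonneg (Finset.filter_subset _ _)
        (fun _ _ _ => (Real.exp_pos _).le))
    intro σ hσ
    rw [mem_filter] at hσ
    exact Real.exp_le_exp.2 (mul_le_mul_of_nonneg_left (by linarith [hσ.2]) hs0)
  have h2 := h1.trans h
  rw [← le_div_iff₀ (Real.exp_pos _), mul_div_assoc, ← Real.exp_sub] at h2
  refine h2.trans (le_of_eq ?_)
  congr 2
  rw [hs]; field_simp; ring


theorem exists_perm_image {n : ℕ} (F F' : Finset (Fin n)) (h : F.card = F'.card) :
    ∃ τ : Equiv.Perm (Fin n), F.image τ = F' := by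
  have e : {x // x ∈ F} ≃ {x // x ∈ F'} := Fintype.equivOfCardEq (by simpa using h)
  refine ⟨e.extendSubtype, ?_⟩
  refine Finset.eq_of_subset_of_card_le ?_ ?_
  · intro y hy
    obtain ⟨x, hx, rfl⟩ := mem_image.1 hy
    exact e.extendSubtype_mem x hx
  · rw [card_image_of_injective _ (Equiv.injective _), h]

theorem card_perm_image {n c : ℕ} (Q F : Finset (Fin n)) (hQ : Q.card = c) (hF : F.card = c) :
    (univ.filter fun σ : Equiv.Perm (Fin n) => Q.image σ = F).card * n.choose c = n.factorial := by
  classical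
  have h1 : ∀ F' ∈ powersetCard c (univ : Finset (Fin n)),
      (univ.filter fun σ : Equiv.Perm (Fin n) => Q.image σ = F').card =
      (univ.filter fun σ : Equiv.Perm (Fin n) => Q.image σ = F).card := by
    intro F' hF'
    rw [mem_powersetCard] at hF'
    obtain ⟨τ, hτ⟩ := exists_perm_image F F' (hF.trans hF'.2.symm)
    symm
    refine Finset.card_bij (fun σ _ => τ * σ) ?_ ?_ ?_
    · intro σ hσ
      simp only [mem_filter, mem_univ, true_and] at hσ ⊢
      rw [← hτ, ← hσ, image_image]; rfl
    · intro σ _ σ' _ h; exact mul_left_cancel h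
    · intro σ hσ
      simp only [mem_filter, mem_univ, true_and] at hσ
      refine ⟨τ⁻¹ * σ, ?_, by simp⟩
      simp only [mem_filter, mem_univ, true_and]
      have : Q.image (τ⁻¹ * σ : Equiv.Perm (Fin n)) = (Q.image σ).image (τ⁻¹ : Equiv.Perm (Fin n)) := by
        rw [image_image]; rfl
      rw [this, hσ, ← hτ, image_image]
      have : ((τ⁻¹ : Equiv.Perm (Fin n)) ∘ τ : Fin n → Fin n) = id := by ext x; simp
      rw [this, image_id]
  have h2 := Finset.card_eq_sum_card_fiberwise (s := (univ : Finset (Equiv.Perm (Fin n))))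
    (f := fun σ : Equiv.Perm (Fin n) => Q.image σ) (t := powersetCard c (univ : Finset (Fin n))) (by
      intro σ _
      rw [mem_coe, mem_powersetCard]
      exact ⟨subset_univ _, by rw [card_image_of_injective _ (Equiv.injective _), hQ]⟩)
  rw [Finset.sum_congr rfl h1, Finset.sum_const, card_powersetCard, card_univ, card_univ,
    Fintype.card_perm, Fintype.card_fin, smul_eq_mul] at h2
  rw [h2, mul_comm]

theorem block_mean {n ν c : ℕ} (hcn : c ≤ n) (Q : Fin ν → Finset (Fin n)) (hQ : ∀ i, (Q i).card = c)
    (𝓕 : Finset (Finset (Fin n))) (h𝓕 : ∀ F ∈ 𝓕, F.card = c) :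
    (∑ σ : Equiv.Perm (Fin n), ((univ.filter fun i => (Q i).image σ ∈ 𝓕).card : ℝ)) / n.factorial
      = ν * 𝓕.card / (n.choose c : ℝ) := by
  classical
  have hch : (0 : ℝ) < (n.choose c : ℝ) := by exact_mod_cast Nat.choose_pos hcn
  have hfac : (0 : ℝ) < (n.factorial : ℝ) := by positivity
  have h1 : ∀ i, ∑ σ : Equiv.Perm (Fin n), (if (Q i).image σ ∈ 𝓕 then (1:ℝ) else 0) =
      𝓕.card * (n.factorial / n.choose c) := by
    intro i
    have h2 : ∀ σ : Equiv.Perm (Fin n), (if (Q i).image σ ∈ 𝓕 then (1:ℝ) else 0) =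
        ∑ F ∈ 𝓕, if (Q i).image σ = F then (1:ℝ) else 0 := by
      intro σ; rw [Finset.sum_ite_eq]
    simp only [h2]
    rw [Finset.sum_comm, ← nsmul_eq_mul, ← Finset.sum_const]
    refine Finset.sum_congr rfl fun F hF => ?_
    rw [Finset.sum_boole, eq_div_iff hch.ne']
    exact_mod_cast card_perm_image (Q i) F (hQ i) (h𝓕 F hF)
  have h3 : ∀ σ : Equiv.Perm (Fin n), ((univ.filter fun i => (Q i).image σ ∈ 𝓕).card : ℝ) =
      ∑ i, if (Q i).image σ ∈ 𝓕 then (1:ℝ) else 0 := by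
    intro σ; rw [Finset.sum_boole]
  simp only [h3]
  rw [Finset.sum_comm]
  simp only [h1]
  rw [Finset.sum_const, card_univ, Fintype.card_fin, nsmul_eq_mul]
  field_simp

theorem block_lip {n ν : ℕ} (Q : Fin ν → Finset (Fin n))
    (hQ2 : ∀ x, (univ.filter fun i => x ∈ Q i).card ≤ 2)
    (𝓕 : Finset (Finset (Fin n))) (σ : Equiv.Perm (Fin n)) (x y : Fin n) :
    |((univ.filter fun i => (Q i).image (Equiv.swap x y * σ : Equiv.Perm (Fin n)) ∈ 𝓕).card : ℝ) -
      ((univ.filter fun i => (Q i).image σ ∈ 𝓕).card : ℝ)| ≤ 4 := by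
  classical
  set W := (univ.filter fun i => σ.symm x ∈ Q i) ∪ (univ.filter fun i => σ.symm y ∈ Q i) with hW
  have hWc : W.card ≤ 4 := (card_union_le _ _).trans (by
    have := hQ2 (σ.symm x); have := hQ2 (σ.symm y); omega)
  have hsame : ∀ i, i ∉ W → (Q i).image (Equiv.swap x y * σ : Equiv.Perm (Fin n)) = (Q i).image σ := by
    intro i hi
    simp only [hW, mem_union, mem_filter, mem_univ, true_and, not_or] at hi
    refine Finset.image_congr ?_
    intro z hz
    simp only [Equiv.Perm.mul_apply]
    refine Equiv.swap_apply_of_ne_of_ne ?_ ?_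
    · rintro rfl; exact hi.1 (by simpa using hz)
    · rintro rfl; exact hi.2 (by simpa using hz)
  have h1 : (univ.filter fun i => (Q i).image (Equiv.swap x y * σ : Equiv.Perm (Fin n)) ∈ 𝓕) ⊆
      (univ.filter fun i => (Q i).image σ ∈ 𝓕) ∪ W := by
    intro i hi
    by_cases h : i ∈ W
    · exact mem_union_right _ h
    · simp only [mem_filter, mem_univ, true_and, hsame i h] at hi
      exact mem_union_left _ (by simpa using hi)
  have h2 : (univ.filter fun i => (Q i).image σ ∈ 𝓕) ⊆
      (univ.filter fun i => (Q i).image (Equiv.swap x y * σ : Equiv.Perm (Fin n)) ∈ 𝓕) ∪ W := by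
    intro i hi
    by_cases h : i ∈ W
    · exact mem_union_right _ h
    · simp only [mem_filter, mem_univ, true_and] at hi
      refine mem_union_left _ ?_
      simp only [mem_filter, mem_univ, true_and, hsame i h]; exact hi
  have h3 := (card_le_card h1).trans (card_union_le _ _)
  have h4 := (card_le_card h2).trans (card_union_le _ _)
  rw [abs_le]
  constructor
  · have : ((univ.filter fun i => (Q i).image σ ∈ 𝓕).card : ℝ) ≤
      ((univ.filter fun i => (Q i).image (Equiv.swap x y * σ : Equiv.Perm (Fin n)) ∈ 𝓕).card : ℝ) + 4 := by
      exact_mod_cast h4.trans (by omega)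
    linarith
  · have : ((univ.filter fun i => (Q i).image (Equiv.swap x y * σ : Equiv.Perm (Fin n)) ∈ 𝓕).card : ℝ) ≤
      ((univ.filter fun i => (Q i).image σ ∈ 𝓕).card : ℝ) + 4 := by
      exact_mod_cast h3.trans (by omega)
    linarith

theorem block_upper {n ν c : ℕ} (hn : 0 < n) (hcn : c ≤ n) (Q : Fin ν → Finset (Fin n))
    (hQ : ∀ i, (Q i).card = c) (hQ2 : ∀ x, (univ.filter fun i => x ∈ Q i).card ≤ 2)
    (𝓕 : Finset (Finset (Fin n))) (h𝓕 : ∀ F ∈ 𝓕, F.card = c) (τ : ℝ) (hτ : 0 ≤ τ) :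
    ((univ.filter fun σ : Equiv.Perm (Fin n) => ν * 𝓕.card / (n.choose c : ℝ) + τ ≤
      ((univ.filter fun i => (Q i).image σ ∈ 𝓕).card : ℝ)).card : ℝ) ≤
      n.factorial * Real.exp (-(τ ^ 2 / (32 * n))) := by
  have h := perm_tail n hn 4 τ (by norm_num) hτ
    (fun σ => ((univ.filter fun i => (Q i).image σ ∈ 𝓕).card : ℝ))
    (fun σ x y => block_lip Q hQ2 𝓕 σ x y)
  rw [block_mean hcn Q hQ 𝓕 h𝓕] at h
  refine h.trans (le_of_eq ?_)
  congr 4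
  ring

theorem block_lower {n ν c : ℕ} (hn : 0 < n) (hcn : c ≤ n) (Q : Fin ν → Finset (Fin n))
    (hQ : ∀ i, (Q i).card = c) (hQ2 : ∀ x, (univ.filter fun i => x ∈ Q i).card ≤ 2)
    (𝓕 : Finset (Finset (Fin n))) (h𝓕 : ∀ F ∈ 𝓕, F.card = c) (τ : ℝ) (hτ : 0 ≤ τ) :
    ((univ.filter fun σ : Equiv.Perm (Fin n) =>
      ((univ.filter fun i => (Q i).image σ ∈ 𝓕).card : ℝ) ≤ ν * 𝓕.card / (n.choose c : ℝ) - τ).card : ℝ) ≤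
      n.factorial * Real.exp (-(τ ^ 2 / (32 * n))) := by
  have h := perm_tail n hn 4 τ (by norm_num) hτ
    (fun σ => -((univ.filter fun i => (Q i).image σ ∈ 𝓕).card : ℝ))
    (fun σ x y => by
      have := block_lip Q hQ2 𝓕 σ x y
      rw [abs_sub_comm] at this
      convert this using 2
      ring)
  rw [Finset.sum_neg_distrib, neg_div, block_mean hcn Q hQ 𝓕 h𝓕] at h
  refine le_trans (le_of_eq ?_) (h.trans (le_of_eq ?_))
  · congr 2
    ext σ
    simp only [mem_filter, mem_univ, true_and]
    constructor <;> intro h <;> linarith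
  · congr 4
    ring


theorem exp_sub_one_le (s : ℝ) (hs : |s| ≤ 1) : Real.exp s - 1 ≤ s + s ^ 2 := by
  have := Real.abs_exp_sub_one_sub_id_le hs
  have := (abs_le.1 this).2
  linarith

theorem sample_exists {G E : Type*} [Fintype G] [Nonempty G] [DecidableEq G]
    (ℰ : Finset E) (A : E → Finset G)
    (N Λ : ℕ) (θ ρ : ℝ) (hθ : 0 ≤ θ) (hθ1 : θ ≤ 1)
    (hA : ∀ e ∈ ℰ, ((A e).card : ℝ) ≤ ρ * Fintype.card G) (hN : N * ρ ≤ (1 - θ) * Λ)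
    (hE : (ℰ.card : ℝ) * Real.exp (-(θ ^ 2 * Λ / 4)) < 1) :
    ∃ σ : Fin N → G, ∀ e ∈ ℰ, (univ.filter fun t => σ t ∈ A e).card ≤ Λ := by
  classical
  set s := θ / 2 with hs
  have hs0 : 0 ≤ s := by positivity
  have hG : (0 : ℝ) < Fintype.card G := by exact_mod_cast Fintype.card_pos
  have hes : 0 ≤ Real.exp s - 1 := by linarith [Real.add_one_le_exp s]
  have hes2 := exp_sub_one_le s (by rw [abs_of_nonneg hs0]; linarith)
  have h1 : ∀ e ∈ ℰ, ((univ.filter fun σ : Fin N → G =>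
      ¬ (univ.filter fun t => σ t ∈ A e).card ≤ Λ).card : ℝ) ≤
      (Fintype.card G : ℝ) ^ N * Real.exp (-(θ ^ 2 * Λ / 4)) := by
    intro e he
    have hmgf : ∑ σ : Fin N → G, Real.exp (s * (univ.filter fun t => σ t ∈ A e).card) ≤
        (Fintype.card G : ℝ) ^ N * Real.exp (N * (ρ * (Real.exp s - 1))) := by
      have e1 : ∀ σ : Fin N → G, Real.exp (s * (univ.filter fun t => σ t ∈ A e).card) =
          ∏ t, (if σ t ∈ A e then Real.exp s else 1) := by
        intro σ
        rw [Finset.prod_ite, Finset.prod_const, Finset.prod_const_one, mul_one, ← Real.exp_nat_mul,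
          mul_comm]
      simp only [e1]
      have e2 := Finset.prod_univ_sum (fun _ : Fin N => (univ : Finset G))
        (fun _ g => if g ∈ A e then Real.exp s else 1)
      rw [Fintype.piFinset_univ] at e2
      rw [← e2, Finset.prod_const, card_univ, Fintype.card_fin, Real.exp_nat_mul, ← mul_pow]
      refine pow_le_pow_left₀ (Finset.sum_nonneg fun g _ => by split_ifs <;> positivity) ?_ N
      have e3 : ∑ g : G, (if g ∈ A e then Real.exp s else 1) =
          Fintype.card G + (A e).card * (Real.exp s - 1) := by
        have : ∀ g : G, (if g ∈ A e then Real.exp s else 1) =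
            1 + (if g ∈ A e then (Real.exp s - 1) else 0) := by
          intro g; split_ifs <;> ring
        simp only [this]
        rw [Finset.sum_add_distrib, Finset.sum_const, nsmul_eq_mul, mul_one, card_univ,
          Finset.sum_ite_mem, Finset.univ_inter, Finset.sum_const, nsmul_eq_mul]
      rw [e3]
      have e4 := mul_le_mul_of_nonneg_right (hA e he) hes
      have e5 := mul_le_mul_of_nonneg_left (Real.add_one_le_exp (ρ * (Real.exp s - 1))) hG.le
      linarith
    have h2 : ((univ.filter fun σ : Fin N → G =>
        ¬ (univ.filter fun t => σ t ∈ A e).card ≤ Λ).card : ℝ) * Real.exp (s * Λ) ≤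
        ∑ σ : Fin N → G, Real.exp (s * (univ.filter fun t => σ t ∈ A e).card) := by
      rw [← nsmul_eq_mul, ← Finset.sum_const]
      refine le_trans (Finset.sum_le_sum (g := fun σ : Fin N → G =>
        Real.exp (s * (univ.filter fun t => σ t ∈ A e).card)) ?_)
        (Finset.sum_le_sum_of_subset_of_nonneg (Finset.filter_subset _ _)
          (fun _ _ _ => (Real.exp_pos _).le))
      intro σ hσ
      rw [mem_filter, not_le] at hσ
      refine Real.exp_le_exp.2 (mul_le_mul_of_nonneg_left ?_ hs0)
      exact_mod_cast hσ.2.le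
    have h3 := h2.trans hmgf
    rw [← le_div_iff₀ (Real.exp_pos _), mul_div_assoc, ← Real.exp_sub] at h3
    refine h3.trans (mul_le_mul_of_nonneg_left (Real.exp_le_exp.2 ?_) (by positivity))
    have h4 : N * (ρ * (Real.exp s - 1)) ≤ (1 - θ) * Λ * (s + s ^ 2) := by
      calc N * (ρ * (Real.exp s - 1)) = (N * ρ) * (Real.exp s - 1) := by ring
        _ ≤ ((1 - θ) * Λ) * (Real.exp s - 1) := mul_le_mul_of_nonneg_right hN hes
        _ ≤ _ := mul_le_mul_of_nonneg_left hes2 (mul_nonneg (by linarith) (by positivity))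
    have h5 : 0 ≤ θ * Λ * s ^ 2 := by positivity
    have hθs : θ = 2 * s := by rw [hs]; ring
    rw [hθs] at h4 h5 ⊢
    nlinarith
  by_contra hcon
  push Not at hcon
  have hcover : (univ : Finset (Fin N → G)) ⊆ ℰ.biUnion fun e => univ.filter fun σ : Fin N → G =>
      ¬ (univ.filter fun t => σ t ∈ A e).card ≤ Λ := by
    intro σ _
    obtain ⟨e, he, h⟩ := hcon σ
    rw [mem_biUnion]
    exact ⟨e, he, by simp only [mem_filter, mem_univ, true_and, not_le]; exact h⟩
  have h6 := (card_le_card hcover).trans card_biUnion_le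
  have h7 : ((Fintype.card G : ℝ)) ^ N ≤
      ℰ.card * ((Fintype.card G : ℝ) ^ N * Real.exp (-(θ ^ 2 * Λ / 4))) := by
    have h8 : ((Fintype.card G : ℝ)) ^ N ≤ ∑ e ∈ ℰ, ((univ.filter fun σ : Fin N → G =>
      ¬ (univ.filter fun t => σ t ∈ A e).card ≤ Λ).card : ℝ) := by
      rw [card_univ, Fintype.card_fun, Fintype.card_fin] at h6
      exact_mod_cast h6
    refine h8.trans ((Finset.sum_le_sum h1).trans (le_of_eq ?_))
    rw [Finset.sum_const, nsmul_eq_mul]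
  have hpow : (0 : ℝ) < (Fintype.card G : ℝ) ^ N := by positivity
  nlinarith

theorem card_pattern {E : Type*} [Fintype E] [DecidableEq E] {Λ : ℕ} (c : E → Fin Λ)
    (D : Finset E) :
    (univ.filter fun ω : E → Fin Λ => ∀ e ∈ D, ω e = c e).card * Λ ^ D.card
      = Λ ^ Fintype.card E := by
  classical
  have h1 : (univ.filter fun ω : E → Fin Λ => ∀ e ∈ D, ω e = c e) =
      Fintype.piFinset fun e => if e ∈ D then {c e} else univ := by
    ext ω
    simp only [mem_filter, mem_univ, true_and, Fintype.mem_piFinset]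
    refine forall_congr' fun e => ?_
    by_cases h : e ∈ D <;> simp [h]
  rw [h1, Fintype.card_piFinset]
  have h2 : ∀ e, (if e ∈ D then ({c e} : Finset (Fin Λ)) else univ).card = if e ∈ D then 1 else Λ := by
    intro e; split_ifs <;> simp
  simp only [h2]
  rw [Finset.prod_ite, Finset.prod_const_one, one_mul, Finset.prod_const, ← pow_add]
  congr 1
  have : (univ.filter fun e => e ∉ D) = Dᶜ := by ext e; simp
  rw [this, add_comm]
  exact card_add_card_compl D

theorem thin_mgf {E J : Type*} [Fintype E] [DecidableEq E] [DecidableEq J] {Λ : ℕ} (hΛ : 0 < Λ)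
    (c : E → Fin Λ) (d : ℕ) (D : J → Finset E) (I : Finset J) (hd : ∀ j ∈ I, (D j).card = d)
    (hdisj : ∀ i ∈ I, ∀ j ∈ I, i ≠ j → Disjoint (D i) (D j)) (s : ℝ) :
    ∑ ω : E → Fin Λ, Real.exp (s * (I.filter fun j => ∀ e ∈ D j, ω e = c e).card) ≤
      (Λ : ℝ) ^ Fintype.card E * Real.exp (I.card * ((Real.exp s - 1) / (Λ : ℝ) ^ d)) := by
  classical
  have hΛ' : (1 : ℝ) ≤ (Λ : ℝ) := by exact_mod_cast hΛ
  set y := Real.exp s - 1 with hy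
  have e1 : ∀ ω : E → Fin Λ, Real.exp (s * (I.filter fun j => ∀ e ∈ D j, ω e = c e).card) =
      ∑ T ∈ I.powerset, y ^ T.card * (if ∀ e ∈ T.biUnion D, ω e = c e then 1 else 0) := by
    intro ω
    have : Real.exp (s * (I.filter fun j => ∀ e ∈ D j, ω e = c e).card) =
        ∏ j ∈ I, (1 + if ∀ e ∈ D j, ω e = c e then y else 0) := by
      have : ∀ j, (1 + if ∀ e ∈ D j, ω e = c e then y else 0) =
          (if ∀ e ∈ D j, ω e = c e then Real.exp s else 1) := by
        intro j; split_ifs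
        · rw [hy]; ring
        · ring
      simp only [this]
      rw [Finset.prod_ite, Finset.prod_const, Finset.prod_const_one, mul_one, ← Real.exp_nat_mul,
        mul_comm]
    rw [this, Finset.prod_one_add]
    refine Finset.sum_congr rfl fun T hT => ?_
    by_cases h : ∀ j ∈ T, ∀ e ∈ D j, ω e = c e
    · rw [Finset.prod_congr rfl (fun j hj => if_pos (h j hj)), Finset.prod_const, if_pos, mul_one]
      intro e he
      obtain ⟨j, hj, hej⟩ := mem_biUnion.1 he
      exact h j hj e hej
    · have h' := h
      push Not at h
      obtain ⟨j, hj, e, he, hne⟩ := h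
      rw [Finset.prod_eq_zero hj, if_neg, mul_zero]
      · intro h2; exact hne (h2 e (mem_biUnion.2 ⟨j, hj, he⟩))
      · rw [if_neg]; intro h2; exact hne (h2 e he)
  simp only [e1]
  rw [Finset.sum_comm]
  have e2 : ∀ T ∈ I.powerset, ∑ ω : E → Fin Λ,
      y ^ T.card * (if ∀ e ∈ T.biUnion D, ω e = c e then (1:ℝ) else 0) =
      (Λ : ℝ) ^ Fintype.card E * ∏ j ∈ T, (y / (Λ : ℝ) ^ d) := by
    intro T hT
    rw [mem_powerset] at hT
    rw [← Finset.mul_sum, Finset.sum_boole, Finset.prod_const, div_pow, ← pow_mul]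
    have hc : (T.biUnion D).card = d * T.card := by
      rw [Finset.card_biUnion (fun i hi j hj hij => hdisj i (hT hi) j (hT hj) hij),
        Finset.sum_congr rfl (fun j hj => hd j (hT hj)), Finset.sum_const, smul_eq_mul, mul_comm]
    have h2 := card_pattern c (T.biUnion D)
    rw [hc] at h2
    have h3 : ((univ.filter fun ω : E → Fin Λ => ∀ e ∈ T.biUnion D, ω e = c e).card : ℝ) *
      (Λ : ℝ) ^ (d * T.card) = (Λ : ℝ) ^ Fintype.card E := by exact_mod_cast h2
    rw [← h3]
    have : (Λ : ℝ) ^ (d * T.card) ≠ 0 := by positivity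
    field_simp
  rw [Finset.sum_congr rfl e2, ← Finset.mul_sum, ← Finset.prod_one_add, Finset.prod_const]
  refine mul_le_mul_of_nonneg_left ?_ (by positivity)
  rw [Real.exp_nat_mul]
  refine pow_le_pow_left₀ ?_ ?_ _
  · have h1 : -1 ≤ y := by rw [hy]; linarith [Real.exp_pos s]
    have h2 : (1 : ℝ) ≤ (Λ : ℝ) ^ d := one_le_pow₀ hΛ'
    have h3 : -1 ≤ y / (Λ : ℝ) ^ d := by
      rw [le_div_iff₀ (by positivity)]; linarith
    linarith
  · rw [add_comm]; exact Real.add_one_le_exp _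

theorem thin_upper {E J : Type*} [Fintype E] [DecidableEq E] [DecidableEq J] {Λ : ℕ} (hΛ : 0 < Λ)
    (c : E → Fin Λ) (d : ℕ) (D : J → Finset E) (I : Finset J) (hd : ∀ j ∈ I, (D j).card = d)
    (hdisj : ∀ i ∈ I, ∀ j ∈ I, i ≠ j → Disjoint (D i) (D j))
    (η₀ δ x : ℝ) (hη₀ : 0 ≤ η₀) (hη₁ : η₀ + δ ≤ 2) (hη₂ : η₀ ≤ 1) (hδ : 0 ≤ δ) (hx : 0 ≤ x)
    (hI : (I.card : ℝ) / (Λ : ℝ) ^ d ≤ (1 + η₀) * x) :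
    ((univ.filter fun ω : E → Fin Λ =>
      (1 + (η₀ + δ)) * x < ((I.filter fun j => ∀ e ∈ D j, ω e = c e).card : ℝ)).card : ℝ) ≤
      (Λ : ℝ) ^ Fintype.card E * Real.exp (-(δ ^ 2 * x / 8)) := by
  set s := δ / 4 with hs
  have hs0 : 0 ≤ s := by positivity
  have hes : 0 ≤ Real.exp s - 1 := by linarith [Real.add_one_le_exp s]
  have hes2 := exp_sub_one_le s (by rw [abs_of_nonneg hs0]; linarith)
  have hm := thin_mgf hΛ c d D I hd hdisj s
  have h2 : ((univ.filter fun ω : E → Fin Λ =>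
      (1 + (η₀ + δ)) * x < ((I.filter fun j => ∀ e ∈ D j, ω e = c e).card : ℝ)).card : ℝ) *
      Real.exp (s * ((1 + (η₀ + δ)) * x)) ≤
      ∑ ω : E → Fin Λ, Real.exp (s * (I.filter fun j => ∀ e ∈ D j, ω e = c e).card) := by
    rw [← nsmul_eq_mul, ← Finset.sum_const]
    refine le_trans (Finset.sum_le_sum (g := fun ω : E → Fin Λ =>
      Real.exp (s * (I.filter fun j => ∀ e ∈ D j, ω e = c e).card)) ?_)
      (Finset.sum_le_sum_of_subset_of_nonneg (Finset.filter_subset _ _)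
        (fun _ _ _ => (Real.exp_pos _).le))
    intro ω hω
    rw [mem_filter] at hω
    exact Real.exp_le_exp.2 (mul_le_mul_of_nonneg_left hω.2.le hs0)
  have h3 := h2.trans hm
  rw [← le_div_iff₀ (Real.exp_pos _), mul_div_assoc, ← Real.exp_sub] at h3
  refine h3.trans (mul_le_mul_of_nonneg_left (Real.exp_le_exp.2 ?_) (by positivity))
  have h4 : I.card * ((Real.exp s - 1) / (Λ : ℝ) ^ d) ≤ (1 + η₀) * x * (s + s ^ 2) := by
    calc I.card * ((Real.exp s - 1) / (Λ : ℝ) ^ d) = I.card / (Λ : ℝ) ^ d * (Real.exp s - 1) := by ring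
      _ ≤ (1 + η₀) * x * (Real.exp s - 1) := mul_le_mul_of_nonneg_right hI hes
      _ ≤ _ := mul_le_mul_of_nonneg_left hes2 (by positivity)
  have h5 : (1 + η₀) * (x * s ^ 2) ≤ 2 * (x * s ^ 2) :=
    mul_le_mul_of_nonneg_right (by linarith) (by positivity)
  have hθs : δ = 4 * s := by rw [hs]; ring
  rw [hθs]
  nlinarith

theorem thin_lower {E J : Type*} [Fintype E] [DecidableEq E] [DecidableEq J] {Λ : ℕ} (hΛ : 0 < Λ)
    (c : E → Fin Λ) (d : ℕ) (D : J → Finset E) (I : Finset J) (hd : ∀ j ∈ I, (D j).card = d)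
    (hdisj : ∀ i ∈ I, ∀ j ∈ I, i ≠ j → Disjoint (D i) (D j))
    (η₀ δ x : ℝ) (hη₀ : 0 ≤ η₀) (hη₁ : η₀ + δ ≤ 2) (hη₂ : η₀ ≤ 1) (hδ : 0 ≤ δ) (hx : 0 ≤ x)
    (hI : (1 - η₀) * x ≤ (I.card : ℝ) / (Λ : ℝ) ^ d) :
    ((univ.filter fun ω : E → Fin Λ =>
      ((I.filter fun j => ∀ e ∈ D j, ω e = c e).card : ℝ) < (1 - (η₀ + δ)) * x).card : ℝ) ≤
      (Λ : ℝ) ^ Fintype.card E * Real.exp (-(δ ^ 2 * x / 8)) := by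
  set s := δ / 4 with hs
  have hs0 : 0 ≤ s := by positivity
  have hes2 := exp_sub_one_le (-s) (by rw [abs_neg, abs_of_nonneg hs0]; linarith)
  have hs1 : s ≤ 1 := by linarith
  have hm := thin_mgf hΛ c d D I hd hdisj (-s)
  have h2 : ((univ.filter fun ω : E → Fin Λ =>
      ((I.filter fun j => ∀ e ∈ D j, ω e = c e).card : ℝ) < (1 - (η₀ + δ)) * x).card : ℝ) *
      Real.exp (-s * ((1 - (η₀ + δ)) * x)) ≤
      ∑ ω : E → Fin Λ, Real.exp (-s * (I.filter fun j => ∀ e ∈ D j, ω e = c e).card) := by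
    rw [← nsmul_eq_mul, ← Finset.sum_const]
    refine le_trans (Finset.sum_le_sum (g := fun ω : E → Fin Λ =>
      Real.exp (-s * (I.filter fun j => ∀ e ∈ D j, ω e = c e).card)) ?_)
      (Finset.sum_le_sum_of_subset_of_nonneg (Finset.filter_subset _ _)
        (fun _ _ _ => (Real.exp_pos _).le))
    intro ω hω
    rw [mem_filter] at hω
    refine Real.exp_le_exp.2 ?_
    have := mul_le_mul_of_nonneg_left hω.2.le hs0
    linarith
  have h3 := h2.trans hm
  rw [← le_div_iff₀ (Real.exp_pos _), mul_div_assoc, ← Real.exp_sub] at h3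
  refine h3.trans (mul_le_mul_of_nonneg_left (Real.exp_le_exp.2 ?_) (by positivity))
  have hneg : -s + (-s) ^ 2 ≤ 0 := by nlinarith
  have h4 : I.card * ((Real.exp (-s) - 1) / (Λ : ℝ) ^ d) ≤ (1 - η₀) * x * (-s + (-s) ^ 2) := by
    calc I.card * ((Real.exp (-s) - 1) / (Λ : ℝ) ^ d)
        = I.card / (Λ : ℝ) ^ d * (Real.exp (-s) - 1) := by ring
      _ ≤ I.card / (Λ : ℝ) ^ d * (-s + (-s) ^ 2) := mul_le_mul_of_nonneg_left hes2 (by positivity)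
      _ ≤ _ := mul_le_mul_of_nonpos_right hI hneg
  have h5 : 0 ≤ η₀ * (x * s ^ 2) := by positivity
  have h6 : 0 ≤ x * s ^ 2 := by positivity
  have hθs : δ = 4 * s := by rw [hs]; ring
  rw [hθs]
  nlinarith


theorem card_ex_le {Ω J : Type*} [Fintype Ω] [DecidableEq Ω] (I : Finset J)
    (P : J → Ω → Prop) [∀ j, DecidablePred (P j)] [DecidablePred fun ω => ∃ j ∈ I, P j ω]
    (B : ℝ) (h : ∀ j ∈ I, ((univ.filter (P j)).card : ℝ) ≤ B) :
    ((univ.filter fun ω => ∃ j ∈ I, P j ω).card : ℝ) ≤ I.card * B := by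
  classical
  have h1 : (univ.filter fun ω => ∃ j ∈ I, P j ω) ⊆ I.biUnion fun j => univ.filter (P j) := by
    intro ω hω
    simpa using hω
  calc ((univ.filter fun ω => ∃ j ∈ I, P j ω).card : ℝ)
      ≤ ((I.biUnion fun j => univ.filter (P j)).card : ℝ) := by exact_mod_cast card_le_card h1
    _ ≤ ((∑ j ∈ I, (univ.filter (P j)).card : ℕ) : ℝ) := by exact_mod_cast card_biUnion_le
    _ = ∑ j ∈ I, ((univ.filter (P j)).card : ℝ) := by push_cast; rfl
    _ ≤ ∑ j ∈ I, B := sum_le_sum h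
    _ = I.card * B := by rw [sum_const, nsmul_eq_mul]

theorem card_four_union {Ω : Type*} [DecidableEq Ω] {S A B C D : Finset Ω} {y : ℝ}
    (h : S ⊆ (A ∪ B) ∪ (C ∪ D)) (hA : (A.card : ℝ) ≤ y) (hB : (B.card : ℝ) ≤ y)
    (hC : (C.card : ℝ) ≤ y) (hD : (D.card : ℝ) ≤ y) : (S.card : ℝ) ≤ 4 * y := by
  have h1 : S.card ≤ (A.card + B.card) + (C.card + D.card) :=
    (card_le_card h).trans ((card_union_le _ _).trans
      (add_le_add (card_union_le _ _) (card_union_le _ _)))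
  have h2 : (S.card : ℝ) ≤ (A.card + B.card) + (C.card + D.card) := by exact_mod_cast h1
  linarith

theorem side_upper {n ν c : ℕ} {J : Type*} (hn : 0 < n) (hcn : c ≤ n)
    (Q : Fin ν → Finset (Fin n))
    (hQ : ∀ i, (Q i).card = c) (hQ2 : ∀ x, (univ.filter fun i => x ∈ Q i).card ≤ 2)
    (I : Finset J) (𝓕 : J → Finset (Finset (Fin n)))
    (h𝓕 : ∀ j ∈ I, ∀ F ∈ 𝓕 j, F.card = c) (y : ℝ)
    (hy : ∀ j ∈ I, ((𝓕 j).card : ℝ) ≤ y * (n.choose c : ℝ)) (τ : ℝ) (hτ : 0 ≤ τ)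
    [DecidablePred fun σ : Equiv.Perm (Fin n) => ∃ j ∈ I, ν * y + τ ≤
      ((univ.filter fun i => (Q i).image σ ∈ 𝓕 j).card : ℝ)] :
    ((univ.filter fun σ : Equiv.Perm (Fin n) => ∃ j ∈ I, ν * y + τ ≤
      ((univ.filter fun i => (Q i).image σ ∈ 𝓕 j).card : ℝ)).card : ℝ) ≤
      I.card * (n.factorial * Real.exp (-(τ ^ 2 / (32 * n)))) := by
  classical
  refine card_ex_le I (fun j (σ : Equiv.Perm (Fin n)) => ν * y + τ ≤
      ((univ.filter fun i => (Q i).image σ ∈ 𝓕 j).card : ℝ)) _ ?_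
  intro j hj
  refine le_trans ?_ (block_upper hn hcn Q hQ hQ2 (𝓕 j) (h𝓕 j hj) τ hτ)
  refine Nat.cast_le.2 (card_le_card ?_)
  intro σ
  simp only [mem_filter, mem_univ, true_and]
  intro h
  refine le_trans ?_ h
  have hc : (0:ℝ) < n.choose c := by exact_mod_cast Nat.choose_pos hcn
  have : (ν : ℝ) * (𝓕 j).card / (n.choose c : ℝ) ≤ ν * y := by
    rw [div_le_iff₀ hc, mul_assoc]
    exact mul_le_mul_of_nonneg_left (hy j hj) (by positivity)
  linarith

theorem side_lower {n ν c : ℕ} {J : Type*} (hn : 0 < n) (hcn : c ≤ n)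
    (Q : Fin ν → Finset (Fin n))
    (hQ : ∀ i, (Q i).card = c) (hQ2 : ∀ x, (univ.filter fun i => x ∈ Q i).card ≤ 2)
    (I : Finset J) (𝓕 : J → Finset (Finset (Fin n)))
    (h𝓕 : ∀ j ∈ I, ∀ F ∈ 𝓕 j, F.card = c) (y : ℝ)
    (hy : ∀ j ∈ I, y * (n.choose c : ℝ) ≤ ((𝓕 j).card : ℝ)) (τ : ℝ) (hτ : 0 ≤ τ)
    [DecidablePred fun σ : Equiv.Perm (Fin n) => ∃ j ∈ I, 
      ((univ.filter fun i => (Q i).image σ ∈ 𝓕 j).card : ℝ) ≤ ν * y - τ] :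
    ((univ.filter fun σ : Equiv.Perm (Fin n) => ∃ j ∈ I, 
      ((univ.filter fun i => (Q i).image σ ∈ 𝓕 j).card : ℝ) ≤ ν * y - τ).card : ℝ) ≤
      I.card * (n.factorial * Real.exp (-(τ ^ 2 / (32 * n)))) := by
  classical
  refine card_ex_le I (fun j (σ : Equiv.Perm (Fin n)) =>
      ((univ.filter fun i => (Q i).image σ ∈ 𝓕 j).card : ℝ) ≤ ν * y - τ) _ ?_
  intro j hj
  refine le_trans ?_ (block_lower hn hcn Q hQ hQ2 (𝓕 j) (h𝓕 j hj) τ hτ)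
  refine Nat.cast_le.2 (card_le_card ?_)
  intro σ
  simp only [mem_filter, mem_univ, true_and]
  intro h
  refine le_trans h ?_
  have hc : (0:ℝ) < n.choose c := by exact_mod_cast Nat.choose_pos hcn
  have : (ν : ℝ) * y ≤ (ν : ℝ) * (𝓕 j).card / (n.choose c : ℝ) := by
    rw [le_div_iff₀ hc, mul_assoc]
    exact mul_le_mul_of_nonneg_left (hy j hj) (by positivity)
  linarith

/-- block systems -/
structure Blocks (n ν a b : ℕ) where
  PA : Fin ν → Finset (Fin n)
  PB : Fin ν → Finset (Fin n)
  cardA : ∀ i, (PA i).card = 2 * a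
  cardB : ∀ i, (PB i).card = b
  interA : ∀ i i', i ≠ i' → (PA i ∩ PA i').card = 0 ∨ (PA i ∩ PA i').card = a
  disjB : ∀ i i', i ≠ i' → Disjoint (PB i) (PB i')
  disjAB : ∀ i i', Disjoint (PA i) (PB i')
  twoA : ∀ x, (univ.filter fun i => x ∈ PA i).card ≤ 2
  inj : ∀ i j i' j', PA i ∪ PB j = PA i' ∪ PB j' → i = i' ∧ j = j'

theorem Blocks.twoB {n ν a b : ℕ} (P : Blocks n ν a b) :
    ∀ x, (univ.filter fun i => x ∈ P.PB i).card ≤ 2 := by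
  intro x
  refine le_trans (card_le_one.2 ?_) one_le_two
  intro i hi j hj
  by_contra hne
  exact disjoint_left.1 (P.disjB i j hne) (mem_filter.1 hi).2 (mem_filter.1 hj).2

theorem mem_hNbhd {n k : ℕ} {H : Finset (Finset (Fin n))} {S Y : Finset (Fin n)} :
    Y ∈ hNbhd n k H S ↔ Y.card = k - S.card ∧ S ∪ Y ∈ H := by
  unfold hNbhd
  simp

/-- good permutation -/
def GoodPerm {n ν a b : ℕ} (P : Blocks n ν a b) (H : Finset (Finset (Fin n))) (η p : ℝ)
    (σ : Equiv.Perm (Fin n)) : Prop :=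
  (∀ i, (1 - η) * p * ν ≤
    ((univ.filter fun j => (P.PA i ∪ P.PB j).image σ ∈ H).card : ℝ)) ∧
  (∀ j, (1 - η) * p * ν ≤
    ((univ.filter fun i => (P.PA i ∪ P.PB j).image σ ∈ H).card : ℝ)) ∧
  (∀ i i', i ≠ i' → ((univ.filter fun j => (P.PA i ∪ P.PB j).image σ ∈ H ∧
    (P.PA i' ∪ P.PB j).image σ ∈ H).card : ℝ) ≤ (1 + η) * p ^ 2 * ν) ∧
  (∀ j j', j ≠ j' → ((univ.filter fun i => (P.PA i ∪ P.PB j).image σ ∈ H ∧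
    (P.PA i ∪ P.PB j').image σ ∈ H).card : ℝ) ≤ (1 + η) * p ^ 2 * ν)

theorem good_perms {n ν a b k : ℕ} (hn : 0 < n) (hk : k = 2 * a + b) (hkn : k ≤ n)
    (P : Blocks n ν a b)
    (H : Finset (Finset (Fin n))) (η₁ δ p τ : ℝ) (hp : 0 ≤ p) (hp1 : p ≤ 1) (hδ : 0 ≤ δ)
    (hA : ∀ S : Finset (Fin n), S.card = 2 * a → (1 - η₁) * p * (n.choose b : ℝ) ≤ hDeg n k H S)
    (hB : ∀ S : Finset (Fin n), S.card = b → (1 - η₁) * p * (n.choose (2 * a) : ℝ) ≤ hDeg n k H S)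
    (hA2 : ∀ S T : Finset (Fin n), S.card = 2 * a → T.card = 2 * a →
      ((S ∩ T).card = 0 ∨ (S ∩ T).card = a) →
      ((hNbhd n k H S ∩ hNbhd n k H T).card : ℝ) ≤ (1 + η₁) * p ^ 2 * (n.choose b : ℝ))
    (hB2 : ∀ S T : Finset (Fin n), S.card = b → T.card = b → Disjoint S T →
      ((hNbhd n k H S ∩ hNbhd n k H T).card : ℝ) ≤ (1 + η₁) * p ^ 2 * (n.choose (2 * a) : ℝ))
    (hτ0 : 0 < τ) (hτ : τ ≤ δ * p ^ 2 * ν) [DecidablePred (GoodPerm P H (η₁ + δ) p)] :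
    ((univ.filter fun σ => ¬ GoodPerm P H (η₁ + δ) p σ).card : ℝ) ≤
      4 * n ^ (2 * k) * (n.factorial * Real.exp (-(τ ^ 2 / (32 * n)))) := by
  classical
  set B : ℝ := n.factorial * Real.exp (-(τ ^ 2 / (32 * n))) with hBdef
  have hB0 : 0 ≤ B := by positivity
  have hτ' : τ ≤ δ * p * ν := by
    refine hτ.trans ?_
    have : p ^ 2 ≤ p := by nlinarith
    gcongr
  have hpw : ∀ c, c ≤ k → ((powersetCard c (univ : Finset (Fin n))).card : ℝ) ≤ (n:ℝ) ^ k := by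
    intro c hc
    rw [card_powersetCard, card_univ, Fintype.card_fin]
    have h1 : n.choose c ≤ n ^ c := Nat.choose_le_pow n c
    have h2 : n ^ c ≤ n ^ k := Nat.pow_le_pow_right hn hc
    exact_mod_cast h1.trans h2
  have hn1 : (1:ℝ) ≤ (n:ℝ)^k := by
    apply one_le_pow₀; exact_mod_cast hn
  have hpw1 : ∀ c, c ≤ k → ((powersetCard c (univ : Finset (Fin n))).card : ℝ) ≤ (n:ℝ) ^ (2*k) := by
    intro c hc
    refine (hpw c hc).trans ?_
    rw [two_mul, pow_add]; nlinarith
  have hpw2 : ∀ c, c ≤ k → ∀ R : Finset (Fin n) × Finset (Fin n) → Prop, ∀ [DecidablePred R],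
      (((powersetCard c (univ : Finset (Fin n)) ×ˢ powersetCard c (univ : Finset (Fin n))).filter R).card : ℝ)
        ≤ (n:ℝ) ^ (2*k) := by
    intro c hc R _
    have : (((powersetCard c (univ : Finset (Fin n)) ×ˢ powersetCard c (univ : Finset (Fin n))).filter R).card : ℝ)
        ≤ ((powersetCard c (univ : Finset (Fin n))).card : ℝ) * ((powersetCard c (univ : Finset (Fin n))).card : ℝ) := by
      rw [← Nat.cast_mul, ← card_product]
      exact_mod_cast card_filter_le _ _
    refine this.trans ?_
    rw [two_mul, pow_add]
    exact mul_le_mul (hpw c hc) (hpw c hc) (by positivity) (by positivity)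
  have hsA : ∀ S : Finset (Fin n), S.card = 2 * a → ∀ F ∈ hNbhd n k H S, F.card = b := by
    intro S hS F hF
    rw [(mem_hNbhd.1 hF).1, hS]; omega
  have hsB : ∀ S : Finset (Fin n), S.card = b → ∀ F ∈ hNbhd n k H S, F.card = 2 * a := by
    intro S hS F hF
    rw [(mem_hNbhd.1 hF).1, hS]; omega
  have e1 := side_lower (c := b) hn (by omega) P.PB P.cardB P.twoB
    (powersetCard (2*a) (univ : Finset (Fin n))) (fun S => hNbhd n k H S)
    (fun S hS => hsA S (mem_powersetCard.1 hS).2) ((1 - η₁) * p)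
    (fun S hS => hA S (mem_powersetCard.1 hS).2) τ hτ0.le
  have e2 := side_lower (c := 2 * a) hn (by omega) P.PA P.cardA P.twoA
    (powersetCard b (univ : Finset (Fin n))) (fun S => hNbhd n k H S)
    (fun S hS => hsB S (mem_powersetCard.1 hS).2) ((1 - η₁) * p)
    (fun S hS => hB S (mem_powersetCard.1 hS).2) τ hτ0.le
  have e3 := side_upper (c := b) hn (by omega) P.PB P.cardB P.twoB
    ((powersetCard (2*a) (univ : Finset (Fin n)) ×ˢ powersetCard (2*a) (univ : Finset (Fin n))).filter
      fun S => (S.1 ∩ S.2).card = 0 ∨ (S.1 ∩ S.2).card = a)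
    (fun S => hNbhd n k H S.1 ∩ hNbhd n k H S.2)
    (fun S hS F hF => by
      simp only [mem_filter, mem_product, mem_powersetCard] at hS
      exact hsA S.1 hS.1.1.2 F (mem_inter.1 hF).1) ((1 + η₁) * p ^ 2)
    (fun S hS => by
      simp only [mem_filter, mem_product, mem_powersetCard] at hS
      exact hA2 S.1 S.2 hS.1.1.2 hS.1.2.2 hS.2) τ hτ0.le
  have e4 := side_upper (c := 2 * a) hn (by omega) P.PA P.cardA P.twoA
    ((powersetCard b (univ : Finset (Fin n)) ×ˢ powersetCard b (univ : Finset (Fin n))).filter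
      fun S => Disjoint S.1 S.2)
    (fun S => hNbhd n k H S.1 ∩ hNbhd n k H S.2)
    (fun S hS F hF => by
      simp only [mem_filter, mem_product, mem_powersetCard] at hS
      exact hsB S.1 hS.1.1.2 F (mem_inter.1 hF).1) ((1 + η₁) * p ^ 2)
    (fun S hS => by
      simp only [mem_filter, mem_product, mem_powersetCard] at hS
      exact hB2 S.1 S.2 hS.1.1.2 hS.1.2.2 hS.2) τ hτ0.le
  rw [← hBdef] at e1 e2 e3 e4
  have f1 := e1.trans (mul_le_mul_of_nonneg_right (hpw1 _ (by omega)) hB0)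
  have f2 := e2.trans (mul_le_mul_of_nonneg_right (hpw1 _ (by omega)) hB0)
  have f3 := e3.trans (mul_le_mul_of_nonneg_right (hpw2 _ (by omega) _) hB0)
  have f4 := e4.trans (mul_le_mul_of_nonneg_right (hpw2 _ (by omega) _) hB0)
  clear e1 e2 e3 e4
  -- membership translations
  have hinjσ : ∀ σ : Equiv.Perm (Fin n), Function.Injective (fun x => σ x) := fun σ => σ.injective
  have tA : ∀ (σ : Equiv.Perm (Fin n)) i j, (P.PB j).image σ ∈ hNbhd n k H ((P.PA i).image σ) ↔
      (P.PA i ∪ P.PB j).image σ ∈ H := by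
    intro σ i j
    rw [mem_hNbhd, image_union, card_image_of_injective _ σ.injective,
      card_image_of_injective _ σ.injective, P.cardA, P.cardB]
    constructor
    · exact fun h => h.2
    · exact fun h => ⟨by omega, h⟩
  have tB : ∀ (σ : Equiv.Perm (Fin n)) i j, (P.PA i).image σ ∈ hNbhd n k H ((P.PB j).image σ) ↔
      (P.PA i ∪ P.PB j).image σ ∈ H := by
    intro σ i j
    rw [mem_hNbhd, union_comm (P.PA i), image_union, card_image_of_injective _ σ.injective,
      card_image_of_injective _ σ.injective, P.cardA, P.cardB]
    constructor
    · exact fun h => h.2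
    · exact fun h => ⟨by omega, h⟩
  have cA : ∀ (σ : Equiv.Perm (Fin n)) i, ((P.PA i).image σ).card = 2 * a := fun σ i => by
    rw [card_image_of_injective _ σ.injective, P.cardA]
  have cB : ∀ (σ : Equiv.Perm (Fin n)) i, ((P.PB i).image σ).card = b := fun σ i => by
    rw [card_image_of_injective _ σ.injective, P.cardB]
  refine (card_four_union (y := (n:ℝ) ^ (2 * k) * B) ?_ f1 f2 f3 f4).trans (le_of_eq (by ring))
  · intro σ hσ
    have hσ := (mem_filter.1 hσ).2
    by_contra hcon
    apply hσ
    simp only [mem_union, mem_filter, mem_univ, true_and, not_or, not_exists, not_and, not_le,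
      mem_powersetCard, mem_product, subset_univ] at hcon
    obtain ⟨⟨g1, g2⟩, g3, g4⟩ := hcon
    refine ⟨fun i => ?_, fun j => ?_, fun i i' hi => ?_, fun j j' hj => ?_⟩
    · have := g1 _ (cA σ i)
      simp only [tA] at this
      nlinarith
    · have := g2 _ (cB σ j)
      simp only [tB] at this
      nlinarith
    · have := g3 ((P.PA i).image σ, (P.PA i').image σ) ⟨⟨cA σ i, cA σ i'⟩, by
        simp only
        rw [← image_inter _ _ σ.injective, card_image_of_injective _ σ.injective]
        exact P.interA i i' hi⟩
      simp only [mem_inter, tA] at this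
      nlinarith
    · have := g4 ((P.PB j).image σ, (P.PB j').image σ) ⟨⟨cB σ j, cB σ j'⟩, by
        simp only
        exact (disjoint_image σ.injective).2 (P.disjB j j' hj)⟩
      simp only [mem_inter, tB] at this
      nlinarith


theorem inj_colour {N Λ : ℕ} (hΛ : 0 < Λ) (T : Finset (Fin N)) (hT : T.card ≤ Λ) :
    ∃ c : Fin N → Fin Λ, ∀ t ∈ T, ∀ t' ∈ T, c t = c t' → t = t' := by
  classical
  have : Nonempty (T ↪ Fin Λ) := by
    rw [Function.Embedding.nonempty_iff_card_le]
    simpa using hT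
  obtain ⟨f⟩ := this
  refine ⟨fun t => if h : t ∈ T then f ⟨t, h⟩ else ⟨0, hΛ⟩, ?_⟩
  intro t ht t' ht' h
  simp only [ht, ht', dif_pos] at h
  have := f.injective h
  simpa using this

theorem exists_avoid_four {Ω : Type*} [Fintype Ω] [DecidableEq Ω] {A B C D : Finset Ω} {y : ℝ}
    (h : 4 * y < Fintype.card Ω) (hA : (A.card : ℝ) ≤ y) (hB : (B.card : ℝ) ≤ y)
    (hC : (C.card : ℝ) ≤ y) (hD : (D.card : ℝ) ≤ y) : ∃ ω, ω ∉ (A ∪ B) ∪ (C ∪ D) := by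
  by_contra hcon
  push Not at hcon
  have := card_four_union (S := univ) (fun ω _ => hcon ω) hA hB hC hD
  rw [card_univ] at this
  linarith

theorem thin_exists {E : Type*} [Fintype E] [DecidableEq E] {N ν Λ : ℕ} (hΛ : 0 < Λ)
    (H : Finset E) (g : Fin N → Fin ν → Fin ν → E)
    (hg : ∀ t i j i' j', g t i j = g t i' j' → i = i' ∧ j = j')
    (hit : ∀ e, (univ.filter fun t => ∃ i j, g t i j = e).card ≤ Λ)
    (p η₀ δ : ℝ) (hp : 0 ≤ p) (hp1 : p ≤ 1) (hη₀ : 0 ≤ η₀) (hη1 : η₀ ≤ 1) (hδ : 0 ≤ δ)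
    (hδ1 : η₀ + δ ≤ 2)
    (hd : ∀ t i, (1 - η₀) * p * ν ≤ ((univ.filter fun j => g t i j ∈ H).card : ℝ))
    (hd' : ∀ t j, (1 - η₀) * p * ν ≤ ((univ.filter fun i => g t i j ∈ H).card : ℝ))
    (hc : ∀ t i i', i ≠ i' → ((univ.filter fun j => g t i j ∈ H ∧ g t i' j ∈ H).card : ℝ)
      ≤ (1 + η₀) * p ^ 2 * ν)
    (hc' : ∀ t j j', j ≠ j' → ((univ.filter fun i => g t i j ∈ H ∧ g t i j' ∈ H).card : ℝ)
      ≤ (1 + η₀) * p ^ 2 * ν)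
    (hsmall : 4 * ((N : ℝ) * ν ^ 2) * Real.exp (-(δ ^ 2 * ((p / Λ) ^ 2 * ν) / 8)) < 1) :
    ∃ Γ : Fin N → Finset (Fin ν × Fin ν),
      (∀ t i j, (i, j) ∈ Γ t → g t i j ∈ H) ∧
      (∀ t t' i j i' j', (i, j) ∈ Γ t → (i', j') ∈ Γ t' → g t i j = g t' i' j' → t = t') ∧
      ∀ t, (∀ i, (1 - (η₀ + δ)) * (p / Λ) * ν ≤ ((univ.filter fun j => (i, j) ∈ Γ t).card : ℝ)) ∧
        (∀ j, (1 - (η₀ + δ)) * (p / Λ) * ν ≤ ((univ.filter fun i => (i, j) ∈ Γ t).card : ℝ)) ∧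
        (∀ i i', i ≠ i' → ((univ.filter fun j => (i, j) ∈ Γ t ∧ (i', j) ∈ Γ t).card : ℝ) ≤
          (1 + (η₀ + δ)) * (p / Λ) ^ 2 * ν) ∧
        (∀ j j', j ≠ j' → ((univ.filter fun i => (i, j) ∈ Γ t ∧ (i, j') ∈ Γ t).card : ℝ) ≤
          (1 + (η₀ + δ)) * (p / Λ) ^ 2 * ν) := by
  classical
  choose col hcol using fun e => inj_colour hΛ _ (hit e)
  have hΛr : (0:ℝ) < Λ := by exact_mod_cast hΛ
  have hΛ1 : (1:ℝ) ≤ Λ := by exact_mod_cast hΛ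
  set q : ℝ := p / Λ with hq
  have hq0 : 0 ≤ q := by positivity
  have hq1 : q ≤ 1 := by rw [hq, div_le_one hΛr]; linarith
  have hqq : q ^ 2 ≤ q := by nlinarith
  set M : ℝ := (Λ : ℝ) ^ Fintype.card E * Real.exp (-(δ ^ 2 * (q ^ 2 * ν) / 8)) with hM
  have hM0 : 0 ≤ M := by positivity
  have hM' : (Λ : ℝ) ^ Fintype.card E * Real.exp (-(δ ^ 2 * (q * ν) / 8)) ≤ M := by
    rw [hM]
    gcongr
  have hind : ∀ y : ℝ, 0 ≤ y → y ≤ (N:ℝ) * ν ^ 2 → y * M ≤ (N : ℝ) * ν^2 * M := fun y _ hy =>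
    mul_le_mul_of_nonneg_right hy hM0
  have hνsq : (ν : ℝ) ≤ (ν:ℝ) ^ 2 := by
    have : ν ≤ ν ^ 2 := Nat.le_self_pow (by norm_num) ν
    exact_mod_cast this
  -- the four bad events
  have f1 := card_ex_le (Ω := E → Fin Λ) (univ : Finset (Fin N × Fin ν))
    (fun s ω => (((univ.filter fun j => g s.1 s.2 j ∈ H).filter fun j =>
      ∀ e ∈ ({g s.1 s.2 j} : Finset E), ω e = col e s.1).card : ℝ) < (1 - (η₀ + δ)) * (q * ν)) M
    (fun s _ => by
      refine (thin_lower hΛ (fun e => col e s.1) 1 (fun j => {g s.1 s.2 j})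
        (univ.filter fun j => g s.1 s.2 j ∈ H) (by simp) ?_ η₀ δ (q * ν) hη₀ hδ1 hη1 hδ
        (by positivity) ?_).trans hM'
      · intro i _ j _ hij
        rw [disjoint_singleton]
        exact fun h => hij (hg _ _ _ _ _ h).2
      · have := hd s.1 s.2
        rw [pow_one, le_div_iff₀ hΛr, hq]
        refine le_trans (le_of_eq ?_) this
        field_simp)
  have f2 := card_ex_le (Ω := E → Fin Λ) (univ : Finset (Fin N × Fin ν))
    (fun s ω => (((univ.filter fun i => g s.1 i s.2 ∈ H).filter fun i =>
      ∀ e ∈ ({g s.1 i s.2} : Finset E), ω e = col e s.1).card : ℝ) < (1 - (η₀ + δ)) * (q * ν)) M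
    (fun s _ => by
      refine (thin_lower hΛ (fun e => col e s.1) 1 (fun i => {g s.1 i s.2})
        (univ.filter fun i => g s.1 i s.2 ∈ H) (by simp) ?_ η₀ δ (q * ν) hη₀ hδ1 hη1 hδ
        (by positivity) ?_).trans hM'
      · intro i _ j _ hij
        rw [disjoint_singleton]
        exact fun h => hij (hg _ _ _ _ _ h).1
      · have := hd' s.1 s.2
        rw [pow_one, le_div_iff₀ hΛr, hq]
        refine le_trans (le_of_eq ?_) this
        field_simp)
  have f3 := card_ex_le (Ω := E → Fin Λ)
    ((univ : Finset (Fin N × Fin ν × Fin ν)).filter fun s => s.2.1 ≠ s.2.2)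
    (fun s ω => (1 + (η₀ + δ)) * (q ^ 2 * ν) <
      (((univ.filter fun j => g s.1 s.2.1 j ∈ H ∧ g s.1 s.2.2 j ∈ H).filter fun j =>
      ∀ e ∈ ({g s.1 s.2.1 j, g s.1 s.2.2 j} : Finset E), ω e = col e s.1).card : ℝ)) M
    (fun s hs => by
      have hs := (mem_filter.1 hs).2
      refine (thin_upper hΛ (fun e => col e s.1) 2 (fun j => {g s.1 s.2.1 j, g s.1 s.2.2 j})
        (univ.filter fun j => g s.1 s.2.1 j ∈ H ∧ g s.1 s.2.2 j ∈ H) ?_ ?_ η₀ δ (q ^ 2 * ν)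
          hη₀ hδ1 hη1 hδ (by positivity) ?_)
      · intro j _
        exact card_pair fun h => hs (hg _ _ _ _ _ h).1
      · intro i _ j _ hij
        rw [disjoint_left]
        intro e he he'
        simp only [mem_insert, mem_singleton] at he he'
        rcases he with rfl | rfl <;> rcases he' with h | h <;> exact hij (hg _ _ _ _ _ h).2
      · have := hc s.1 s.2.1 s.2.2 hs
        rw [div_le_iff₀ (by positivity), hq]
        refine this.trans (le_of_eq ?_)
        field_simp)
  have f4 := card_ex_le (Ω := E → Fin Λ)
    ((univ : Finset (Fin N × Fin ν × Fin ν)).filter fun s => s.2.1 ≠ s.2.2)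
    (fun s ω => (1 + (η₀ + δ)) * (q ^ 2 * ν) <
      (((univ.filter fun i => g s.1 i s.2.1 ∈ H ∧ g s.1 i s.2.2 ∈ H).filter fun i =>
      ∀ e ∈ ({g s.1 i s.2.1, g s.1 i s.2.2} : Finset E), ω e = col e s.1).card : ℝ)) M
    (fun s hs => by
      have hs := (mem_filter.1 hs).2
      refine (thin_upper hΛ (fun e => col e s.1) 2 (fun i => {g s.1 i s.2.1, g s.1 i s.2.2})
        (univ.filter fun i => g s.1 i s.2.1 ∈ H ∧ g s.1 i s.2.2 ∈ H) ?_ ?_ η₀ δ (q ^ 2 * ν)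
          hη₀ hδ1 hη1 hδ (by positivity) ?_)
      · intro j _
        exact card_pair fun h => hs (hg _ _ _ _ _ h).2
      · intro i _ j _ hij
        rw [disjoint_left]
        intro e he he'
        simp only [mem_insert, mem_singleton] at he he'
        rcases he with rfl | rfl <;> rcases he' with h | h <;> exact hij (hg _ _ _ _ _ h).1
      · have := hc' s.1 s.2.1 s.2.2 hs
        rw [div_le_iff₀ (by positivity), hq]
        refine this.trans (le_of_eq ?_)
        field_simp)
  have c1 : (((univ : Finset (Fin N × Fin ν)).card : ℕ) : ℝ) ≤ (N:ℝ) * ν ^ 2 := by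
    simp only [card_univ, Fintype.card_prod, Fintype.card_fin, Nat.cast_mul]
    gcongr
  have c2 : ((((univ : Finset (Fin N × Fin ν × Fin ν)).filter fun s => s.2.1 ≠ s.2.2).card : ℕ) : ℝ)
      ≤ (N:ℝ) * ν ^ 2 := by
    refine (Nat.cast_le.2 (card_filter_le _ _)).trans (le_of_eq ?_)
    simp only [card_univ, Fintype.card_prod, Fintype.card_fin, Nat.cast_mul]
    ring
  have g1 := f1.trans (mul_le_mul_of_nonneg_right c1 hM0)
  have g2 := f2.trans (mul_le_mul_of_nonneg_right c1 hM0)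
  have g3 := f3.trans (mul_le_mul_of_nonneg_right c2 hM0)
  have g4 := f4.trans (mul_le_mul_of_nonneg_right c2 hM0)
  clear f1 f2 f3 f4
  have hlt : 4 * ((N:ℝ) * ν ^ 2 * M) < Fintype.card (E → Fin Λ) := by
    rw [Fintype.card_fun, Fintype.card_fin, Nat.cast_pow]
    have hpos : (0:ℝ) < (Λ : ℝ) ^ Fintype.card E := by positivity
    have h2 : 4 * ((N:ℝ) * ν ^ 2 * M) = (Λ : ℝ) ^ Fintype.card E *
      (4 * ((N : ℝ) * ν ^ 2) * Real.exp (-(δ ^ 2 * (q ^ 2 * ν) / 8))) := by rw [hM]; ring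
    rw [h2]
    nlinarith
  have hex := exists_avoid_four hlt g1 g2 g3 g4
  obtain ⟨ω, hω⟩ := hex
  simp only [mem_union, mem_filter, mem_univ, true_and, not_or, not_exists, not_and, not_lt,
    Prod.forall, mem_singleton, forall_eq, filter_filter, mem_insert, forall_eq_or_imp] at hω
  obtain ⟨⟨h1, h2⟩, h3, h4⟩ := hω
  refine ⟨fun t => univ.filter fun s => g t s.1 s.2 ∈ H ∧ ω (g t s.1 s.2) = col (g t s.1 s.2) t,
    ?_, ?_, ?_⟩
  · intro t i j h
    exact ((mem_filter.1 h).2).1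
  · intro t t' i j i' j' h h' he
    have a1 := ((mem_filter.1 h).2).2
    have a2 := ((mem_filter.1 h').2).2
    simp only at a1 a2
    rw [← he] at a2
    refine hcol (g t i j) t (by simp only [mem_filter, mem_univ, true_and]; exact ⟨i, j, rfl⟩) t'
      (by simp only [mem_filter, mem_univ, true_and]; exact ⟨i', j', he.symm⟩) (a1.symm.trans a2)
  · intro t
    simp only [mem_filter, mem_univ, true_and]
    refine ⟨fun i => ?_, fun j => ?_, fun i i' hi => ?_, fun j j' hj => ?_⟩
    · refine le_trans (le_of_eq (by ring)) (h1 t i)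
    · refine le_trans (le_of_eq (by ring)) (h2 t j)
    · refine le_trans ?_ ((h3 t i i' hi).trans (le_of_eq (by ring)))
      refine Nat.cast_le.2 (card_le_card ?_)
      intro j
      simp only [mem_filter, mem_univ, true_and]
      tauto
    · refine le_trans ?_ ((h4 t j j' hj).trans (le_of_eq (by ring)))
      refine Nat.cast_le.2 (card_le_card ?_)
      intro j
      simp only [mem_filter, mem_univ, true_and]
      tauto


/-- the first `a` columns -/
def colA (ℓ a : ℕ) : Finset (Fin ℓ) := univ.filter fun r => r.val < a

/-- the remaining columns -/
def colB (ℓ a : ℕ) : Finset (Fin ℓ) := univ.filter fun r => a ≤ r.val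

theorem card_colA {ℓ a : ℕ} (h : a ≤ ℓ) : (colA ℓ a).card = a := by
  unfold colA
  rw [← Fintype.card_subtype]
  refine Eq.trans (Fintype.card_congr (β := Fin a) ?_) (Fintype.card_fin a)
  refine ⟨fun x => ⟨x.1.1, x.2⟩, fun x => ⟨⟨x.1, by omega⟩, x.2⟩, ?_, ?_⟩
  · intro x; rfl
  · intro x; rfl

theorem card_colB {ℓ a b : ℕ} (h : a + b = ℓ) : (colB ℓ a).card = b := by
  have h1 := card_filter_add_card_filter_not (s := (univ : Finset (Fin ℓ))) (fun r => r.val < a)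
  have h2 := card_colA (ℓ := ℓ) (a := a) (by omega)
  unfold colA at h2
  rw [h2, card_univ, Fintype.card_fin] at h1
  unfold colB
  simp only [not_lt] at h1
  omega

/-- block system from a grid -/
def mkBlocks {n ν ℓ a b : ℕ} (e : Fin ν × Fin ℓ ≃ Fin n) (s : Equiv.Perm (Fin ν))
    (h1 : ∀ i, s i ≠ i) (h2 : ∀ i, s (s i) ≠ i) (hab : a + b = ℓ) (ha : 0 < a) (hb : 0 < b) :
    Blocks n ν a b where
  PA i := (({i, s i} : Finset (Fin ν)) ×ˢ colA ℓ a).image e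
  PB j := (({j} : Finset (Fin ν)) ×ˢ colB ℓ a).image e
  cardA i := by
    rw [card_image_of_injective _ e.injective, card_product, card_colA (by omega),
      card_pair (h1 i).symm]
  cardB i := by
    rw [card_image_of_injective _ e.injective, card_product, card_colB hab, card_singleton, one_mul]
  interA i i' hi := by
    rw [← image_inter _ _ e.injective, card_image_of_injective _ e.injective, ← inter_product,
      card_product, card_colA (by omega)]
    have hle : (({i, s i} : Finset (Fin ν)) ∩ {i', s i'}).card ≤ 1 := by
      rw [card_le_one]
      intro x hx y hy
      simp only [mem_inter, mem_insert, mem_singleton] at hx hy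
      by_contra hxy
      rcases hx with ⟨rfl | rfl, hx⟩
      · rcases hx with hx | hx
        · exact hi hx
        · rcases hy with ⟨rfl | rfl, hy⟩
          · exact hxy rfl
          · rcases hy with hy | hy
            · rw [hx] at hy; exact h2 _ hy
            · exact hi (s.injective hy)
      · rcases hx with hx | hx
        · rcases hy with ⟨rfl | rfl, hy⟩
          · rcases hy with hy | hy
            · exact hi hy
            · rw [hy] at hx; exact h2 _ hx
          · exact hxy rfl
        · exact hi (s.injective hx)
    interval_cases h : (({i, s i} : Finset (Fin ν)) ∩ {i', s i'}).card
    · left; simp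
    · right; simp
  disjB i i' hi := by
    rw [disjoint_image e.injective, disjoint_product]
    left
    simpa using hi
  disjAB i i' := by
    rw [disjoint_image e.injective, disjoint_product]
    right
    rw [disjoint_left]
    intro r hr hr'
    simp only [colA, colB, mem_filter, mem_univ, true_and] at hr hr'
    omega
  twoA x := by
    refine (card_le_card (t := {(e.symm x).1, s.symm (e.symm x).1}) ?_).trans card_le_two
    intro i hi
    simp only [mem_filter, mem_univ, true_and, mem_image, mem_product] at hi
    obtain ⟨y, hy, rfl⟩ := hi
    simp only [mem_insert, mem_singleton, Equiv.symm_apply_apply] at hy ⊢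
    rcases hy.1 with h | h
    · left; exact h.symm
    · right; rw [h]; simp
  inj i j i' j' h := by
    rw [← image_union, ← image_union] at h
    have h := image_injective e.injective h
    have ha' : a < ℓ := by omega
    have hA : ∀ x, (x = i ∨ x = s i) ↔ (x = i' ∨ x = s i') := by
      intro x
      have := congrArg (fun S => (x, (⟨0, by omega⟩ : Fin ℓ)) ∈ S) h
      simpa [colA, colB, ha, ha.ne'] using this
    have hB : ∀ x, x = j ↔ x = j' := by
      intro x
      have := congrArg (fun S => (x, (⟨a, ha'⟩ : Fin ℓ)) ∈ S) h
      simpa [colA, colB, eq_comm] using this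
    refine ⟨?_, (hB j).1 rfl⟩
    rcases (hA i).1 (Or.inl rfl) with hi | hi
    · exact hi
    · rcases (hA (s i)).1 (Or.inr rfl) with hi' | hi'
      · rw [hi] at hi'; exact absurd hi' (h2 _)
      · exact s.injective hi'

/-- the grid -/
def grid (ℓ ν : ℕ) : Fin ν × Fin ℓ ≃ Fin (ℓ * ν) :=
  finProdFinEquiv.trans (finCongr (Nat.mul_comm ν ℓ))

theorem grid_val {ℓ ν : ℕ} (x : Fin ν × Fin ℓ) : (grid ℓ ν x).val = x.2.val + ℓ * x.1.val := by
  simp [grid]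

/-- cyclic successor -/
def nxt (ν : ℕ) [NeZero ν] : Equiv.Perm (Fin ν) := Equiv.addRight 1

theorem nxt_val {ν : ℕ} [NeZero ν] (hν : 3 ≤ ν) (i : Fin ν) : (nxt ν i).val = (i.val + 1) % ν := by
  simp [nxt, Fin.val_add, Nat.mod_eq_of_lt (by omega : 1 < ν)]

theorem nxt_ne {ν : ℕ} [NeZero ν] (hν : 3 ≤ ν) (i : Fin ν) : nxt ν i ≠ i := by
  intro h
  have h := congrArg Fin.val h
  rw [nxt_val hν] at h
  have := i.2
  rcases lt_or_eq_of_le (Nat.succ_le_of_lt this) with h' | h'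
  · rw [Nat.mod_eq_of_lt h'] at h; omega
  · rw [show i.val + 1 = ν from h', Nat.mod_self] at h; omega

theorem nxt_ne2 {ν : ℕ} [NeZero ν] (hν : 3 ≤ ν) (i : Fin ν) : nxt ν (nxt ν i) ≠ i := by
  intro h
  have h := congrArg Fin.val h
  rw [nxt_val hν, nxt_val hν, Nat.mod_add_mod] at h
  have := i.2
  rcases lt_or_ge (i.val + 1 + 1) ν with h' | h'
  · rw [Nat.mod_eq_of_lt h'] at h; omega
  · rw [Nat.mod_eq_sub_mod h', Nat.mod_eq_of_lt (by omega)] at h; omega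

/-- residues as positions -/
def zfin (n : ℕ) [NeZero n] : ZMod n ≃ Fin n where
  toFun x := ⟨x.val, ZMod.val_lt x⟩
  invFun y := (y.val : ZMod n)
  left_inv x := ZMod.natCast_zmod_val x
  right_inv y := Fin.ext (ZMod.val_cast_of_lt y.2)

/-- shear -/
def shear {ν : ℕ} (ℓ a : ℕ) (π : Fin ν ≃ Fin ν) : Fin ν × Fin ℓ ≃ Fin ν × Fin ℓ where
  toFun x := (if x.2.val < a then x.1 else π x.1, x.2)
  invFun x := (if x.2.val < a then x.1 else π.symm x.1, x.2)
  left_inv x := by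
    by_cases h : x.2.val < a <;> simp [h]
  right_inv x := by
    by_cases h : x.2.val < a <;> simp [h]

theorem ham_of_matching {ℓ ν a b k : ℕ} [NeZero ν] (hν : 3 ≤ ν) (hab : a + b = ℓ) (ha : 0 < a)
    (hb : 0 < b) (hk : k = 2 * a + b) (H : Finset (Finset (Fin (ℓ * ν))))
    (σ : Equiv.Perm (Fin (ℓ * ν))) (π : Fin ν ≃ Fin ν)
    (P : Blocks (ℓ * ν) ν a b)
    (hP : P = mkBlocks (grid ℓ ν) (nxt ν) (nxt_ne hν) (nxt_ne2 hν) hab ha hb)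
    (hH : ∀ i, (P.PA i ∪ P.PB (π i)).image σ ∈ H) :
    IsTypeHamCycle (ℓ * ν) k ℓ H (univ.image fun i => (P.PA i ∪ P.PB (π i)).image σ) := by
  have hℓ : 0 < ℓ := by omega
  have hdiv : ℓ * ν / ℓ = ν := Nat.mul_div_cancel_left ν hℓ
  have hNZ : NeZero (ℓ * ν) := ⟨by positivity⟩
  refine ⟨?_, ?_, ?_⟩
  · intro x hx
    obtain ⟨i, _, rfl⟩ := mem_image.1 hx
    exact hH i
  · rw [card_image_of_injective, card_univ, Fintype.card_fin, hdiv]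
    intro i i' h
    exact (P.inj _ _ _ _ (image_injective σ.injective h)).1
  · set f : ZMod (ℓ * ν) ≃ Fin (ℓ * ν) :=
      ((((zfin (ℓ * ν)).trans (grid ℓ ν).symm).trans (shear ℓ a π)).trans
        (grid ℓ ν)).trans σ with hf
    have hfx : ∀ (m : ℕ) (x : Fin ν × Fin ℓ), m % (ℓ * ν) = (grid ℓ ν x).val →
        f (m : ZMod (ℓ * ν)) = σ (grid ℓ ν (shear ℓ a π x)) := by
      intro m x h
      have h1 : (zfin (ℓ * ν)) (m : ZMod (ℓ * ν)) = grid ℓ ν x := by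
        apply Fin.ext
        rw [← h]
        exact ZMod.val_natCast _ _
      simp only [hf, Equiv.trans_apply]
      have h2 : (zfin (ℓ * ν)) (m : ZMod (ℓ * ν)) = grid ℓ ν x := h1
      rw [h2, Equiv.symm_apply_apply]
    refine ⟨f, ?_⟩
    have key : ∀ i : Fin ν, ((range k).image fun j => f ((i.val * ℓ + j : ℕ) : ZMod (ℓ * ν))) =
        (P.PA i ∪ P.PB (π i)).image σ := by
      intro i
      symm
      apply eq_of_subset_of_card_le
      · have hlt : ∀ r : Fin ℓ, (i.val * ℓ + r.val) % (ℓ * ν) = (grid ℓ ν (i, r)).val := by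
          intro r
          rw [grid_val, Nat.mod_eq_of_lt]
          · simp only; ring
          · have h1 := i.2
            have h2 := r.2
            calc i.val * ℓ + r.val < i.val * ℓ + ℓ := by omega
              _ = ℓ * (i.val + 1) := by ring
              _ ≤ ℓ * ν := Nat.mul_le_mul_left _ h1
        intro y hy
        obtain ⟨x, hx, rfl⟩ := mem_image.1 hy
        rw [hP] at hx
        simp only [mkBlocks, mem_union, mem_image, mem_product, mem_insert, mem_singleton, colA,
          colB, mem_filter, mem_univ, true_and] at hx
        rw [mem_image]
        rcases hx with ⟨⟨z, r⟩, ⟨h1, h2⟩, rfl⟩ | ⟨⟨z, r⟩, ⟨h1, h2⟩, rfl⟩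
        · simp only at h1 h2
          rcases h1 with rfl | rfl
          · refine ⟨r.val, mem_range.2 (by omega), ?_⟩
            rw [hfx _ (z, r) (hlt r)]
            simp [shear, h2]
          · refine ⟨ℓ + r.val, mem_range.2 (by omega), ?_⟩
            rw [hfx _ (nxt ν i, r) ?_]
            · simp [shear, h2]
            · rw [grid_val, nxt_val hν]
              simp only
              have hi := i.2
              rcases lt_or_eq_of_le (Nat.succ_le_of_lt hi) with h' | h'
              · have h' : i.val + 1 < ν := h'
                rw [Nat.mod_eq_of_lt h', Nat.mod_eq_of_lt]
                · ring
                · calc i.val * ℓ + (ℓ + r.val) < i.val * ℓ + (ℓ + ℓ) := by omega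
                    _ = ℓ * (i.val + 1 + 1) := by ring
                    _ ≤ ℓ * ν := Nat.mul_le_mul_left _ h'
              · have h' : i.val + 1 = ν := h'
                rw [h', Nat.mod_self, show i.val * ℓ + (ℓ + r.val) = r.val + ℓ * ν by
                  linear_combination ℓ * h', Nat.add_mod_right, Nat.mod_eq_of_lt]
                · ring
                · have := r.2
                  nlinarith
        · simp only at h1 h2
          subst h1
          refine ⟨r.val, mem_range.2 (by omega), ?_⟩
          rw [hfx _ (i, r) (hlt r)]
          simp [shear, not_lt.2 h2]
      · refine card_image_le.trans ?_
        rw [card_range, card_image_of_injective _ σ.injective,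
          card_union_of_disjoint (P.disjAB _ _), P.cardA, P.cardB, hk]
    unfold typeCycleEdges
    rw [hdiv]
    ext y
    simp only [mem_image, mem_univ, true_and, mem_range]
    constructor
    · rintro ⟨i, rfl⟩
      exact ⟨i.val, i.2, key i⟩
    · rintro ⟨i, hi, rfl⟩
      exact ⟨⟨i, hi⟩, (key ⟨i, hi⟩).symm⟩


theorem packing_core {ℓ ν a b k N Λ r : ℕ} (hν : 3 ≤ ν) (hab : a + b = ℓ) (ha : 0 < a)
    (hb : 0 < b) (hk : k = 2 * a + b) (H : Finset (Finset (Fin (ℓ * ν)))) (hΛ : 0 < Λ)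
    (p u η₁ δ δ' τ β θ : ℝ) (hp : 0 < p) (hp1 : p ≤ 1) (hδ : 0 ≤ δ) (hδ' : 0 ≤ δ')
    (hη₁ : 0 ≤ η₁) (hu : 0 < u) (hu2 : u ≤ 1 / 2) (hηu : η₁ + δ + δ' ≤ 1.01 * u ^ 3)
    (hA : ∀ S : Finset (Fin (ℓ * ν)), S.card = 2 * a →
      (1 - η₁) * p * ((ℓ * ν).choose b : ℝ) ≤ hDeg (ℓ * ν) k H S)
    (hB : ∀ S : Finset (Fin (ℓ * ν)), S.card = b →
      (1 - η₁) * p * ((ℓ * ν).choose (2 * a) : ℝ) ≤ hDeg (ℓ * ν) k H S)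
    (hA2 : ∀ S T : Finset (Fin (ℓ * ν)), S.card = 2 * a → T.card = 2 * a →
      ((S ∩ T).card = 0 ∨ (S ∩ T).card = a) →
      ((hNbhd (ℓ * ν) k H S ∩ hNbhd (ℓ * ν) k H T).card : ℝ) ≤
        (1 + η₁) * p ^ 2 * ((ℓ * ν).choose b : ℝ))
    (hB2 : ∀ S T : Finset (Fin (ℓ * ν)), S.card = b → T.card = b → Disjoint S T →
      ((hNbhd (ℓ * ν) k H S ∩ hNbhd (ℓ * ν) k H T).card : ℝ) ≤
        (1 + η₁) * p ^ 2 * ((ℓ * ν).choose (2 * a) : ℝ))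
    (hτ0 : 0 < τ) (hτ : τ ≤ δ * p ^ 2 * ν) (hβ1 : β < 1)
    (hβ : 4 * ((ℓ * ν : ℕ) : ℝ) ^ (2 * k) * Real.exp (-(τ ^ 2 / (32 * ((ℓ * ν : ℕ) : ℝ)))) ≤ β)
    (hθ0 : 0 ≤ θ) (hθ1 : θ ≤ 1)
    (hN : N * ((ν : ℝ) ^ 2 / ((ℓ * ν).choose k : ℝ)) ≤ (1 - θ) * (1 - β) * Λ)
    (hE : ((ℓ * ν).choose k : ℝ) * Real.exp (-(θ ^ 2 * Λ / 4)) < 1)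
    (hthin : 4 * ((N : ℝ) * ν ^ 2) * Real.exp (-(δ' ^ 2 * ((p / Λ) ^ 2 * ν) / 8)) < 1)
    (hbig : 1 ≤ 0.07 * u ^ 4 * (p / Λ) ^ 2 * ν)
    (hr : (r : ℝ) ≤ (1 - 1.9 * u) * (p / Λ) * ν)
    (t : ℝ) (ht : t ≤ N * r) : HamPackingGE (ℓ * ν) k ℓ H t := by
  classical
  have hℓ : 2 ≤ ℓ := by omega
  have hNZ : NeZero ν := ⟨by omega⟩
  have hn : 0 < ℓ * ν := by positivity
  have hkn : k ≤ ℓ * ν := by nlinarith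
  obtain ⟨P, hP⟩ : ∃ P, P = mkBlocks (grid ℓ ν) (nxt ν) (nxt_ne hν) (nxt_ne2 hν) hab ha hb :=
    ⟨_, rfl⟩
  have hu3 : u ^ 3 ≤ 1 / 8 := by
    calc u ^ 3 ≤ (1/2) ^ 3 := by gcongr
      _ = 1/8 := by norm_num
  -- good permutations
  have hgood := good_perms hn hk hkn P H η₁ δ p τ hp.le hp1 hδ hA hB hA2 hB2 hτ0 hτ
  have hfac : (0:ℝ) < (ℓ * ν).factorial := by exact_mod_cast (ℓ * ν).factorial_pos
  have hch : (0:ℝ) < (ℓ * ν).choose k := by exact_mod_cast Nat.choose_pos hkn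
  have hbad : ((univ.filter fun σ => ¬ GoodPerm P H (η₁ + δ) p σ).card : ℝ) ≤ β * (ℓ * ν).factorial := by
    refine hgood.trans ?_
    have := mul_le_mul_of_nonneg_right hβ hfac.le
    linarith
  have hcardG : (1 - β) * (ℓ * ν).factorial ≤
      (Fintype.card {σ : Equiv.Perm (Fin (ℓ * ν)) // GoodPerm P H (η₁ + δ) p σ} : ℝ) := by
    have h1 := card_filter_add_card_filter_not (s := (univ : Finset (Equiv.Perm (Fin (ℓ * ν)))))
      (fun σ => GoodPerm P H (η₁ + δ) p σ)
    rw [card_univ, Fintype.card_perm, Fintype.card_fin] at h1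
    rw [Fintype.card_subtype]
    have h2 : ((univ.filter fun σ => GoodPerm P H (η₁ + δ) p σ).card : ℝ) +
      ((univ.filter fun σ => ¬ GoodPerm P H (η₁ + δ) p σ).card : ℝ) = (ℓ * ν).factorial := by
      exact_mod_cast h1
    linarith
  have hne : Nonempty {σ : Equiv.Perm (Fin (ℓ * ν)) // GoodPerm P H (η₁ + δ) p σ} := by
    rw [← Fintype.card_pos_iff]
    have : (0:ℝ) < (1 - β) * (ℓ * ν).factorial := mul_pos (by linarith) hfac
    exact_mod_cast this.trans_le hcardG
  have hPk : ∀ i j, (P.PA i ∪ P.PB j).card = k := fun i j => by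
    rw [card_union_of_disjoint (P.disjAB _ _), P.cardA, P.cardB, hk]
  have hhit : ∀ e : Finset (Fin (ℓ * ν)), e.card = k →
      ((univ.filter fun σ : Equiv.Perm (Fin (ℓ * ν)) => ∃ s ∈ (univ : Finset (Fin ν × Fin ν)),
        (P.PA s.1 ∪ P.PB s.2).image σ = e).card : ℝ) ≤
        (ν : ℝ) ^ 2 / ((ℓ * ν).choose k : ℝ) * (ℓ * ν).factorial := by
    intro e he
    refine (card_ex_le (univ : Finset (Fin ν × Fin ν))
      (fun s (σ : Equiv.Perm (Fin (ℓ * ν))) => (P.PA s.1 ∪ P.PB s.2).image σ = e)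
      ((ℓ * ν).factorial / ((ℓ * ν).choose k : ℝ)) ?_).trans (le_of_eq ?_)
    · intro s _
      rw [le_div_iff₀ hch]
      exact_mod_cast (card_perm_image _ e (hPk s.1 s.2) he).le
    · simp only [card_univ, Fintype.card_prod, Fintype.card_fin, Nat.cast_mul]
      ring
  obtain ⟨σ', hσ'⟩ := sample_exists (powersetCard k (univ : Finset (Fin (ℓ * ν))))
    (fun e => univ.filter fun σ : {σ : Equiv.Perm (Fin (ℓ * ν)) // GoodPerm P H (η₁ + δ) p σ} =>
      ∃ i j, (P.PA i ∪ P.PB j).image σ.1 = e) N Λ θ ((ν : ℝ) ^ 2 / ((ℓ * ν).choose k : ℝ) / (1 - β))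
    hθ0 hθ1 (by
      intro e he
      have he := (mem_powersetCard.1 he).2
      have h1 : (univ.filter fun σ : {σ : Equiv.Perm (Fin (ℓ * ν)) // GoodPerm P H (η₁ + δ) p σ} =>
        ∃ i j, (P.PA i ∪ P.PB j).image σ.1 = e).card ≤
          (univ.filter fun σ : Equiv.Perm (Fin (ℓ * ν)) => ∃ s ∈ (univ : Finset (Fin ν × Fin ν)),
        (P.PA s.1 ∪ P.PB s.2).image σ = e).card := by
        rw [← card_image_of_injective _ Subtype.val_injective]
        apply card_le_card
        intro σ hσ
        simp only [mem_image, mem_filter, mem_univ, true_and] at hσ ⊢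
        obtain ⟨σ1, ⟨i, j, h⟩, rfl⟩ := hσ
        exact ⟨(i, j), h⟩
      refine (Nat.cast_le.2 h1).trans ((hhit e he).trans ?_)
      have h5 := (le_div_iff₀ (by linarith : (0:ℝ) < 1 - β)).2 ((mul_comm _ _).le.trans hcardG)
      exact (mul_le_mul_of_nonneg_left h5 (by positivity)).trans (le_of_eq (by ring))) (by
      rw [← mul_div_assoc, div_le_iff₀ (by linarith : (0:ℝ) < 1 - β)]
      linarith) (by
      rw [card_powersetCard, card_univ, Fintype.card_fin]
      exact hE)
  have hit : ∀ e : Finset (Fin (ℓ * ν)),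
      (univ.filter fun t => ∃ i j, (P.PA i ∪ P.PB j).image (σ' t).1 = e).card ≤ Λ := by
    intro e
    by_cases he : e.card = k
    · have := hσ' e (mem_powersetCard.2 ⟨subset_univ _, he⟩)
      simpa only [mem_filter, mem_univ, true_and] using this
    · rw [filter_eq_empty_iff.2]
      · simp
      · rintro t _ ⟨i, j, h⟩
        apply he
        rw [← h, card_image_of_injective _ (σ' t).1.injective, hPk]
  obtain ⟨Γ, hΓH, hΓd, hΓ⟩ := thin_exists hΛ H
    (fun t i j => (P.PA i ∪ P.PB j).image (σ' t).1)
    (fun t i j i' j' h => P.inj _ _ _ _ (image_injective (σ' t).1.injective h))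
    hit p (η₁ + δ) δ' hp.le hp1 (by positivity) (by linarith) hδ' (by linarith)
    (fun t => (σ' t).2.1) (fun t => (σ' t).2.2.1) (fun t => (σ' t).2.2.2.1)
    (fun t => (σ' t).2.2.2.2) hthin
  have hΛr : (0:ℝ) < Λ := by exact_mod_cast hΛ
  have hmatch : ∀ t : Fin N, ∃ π : Fin r → (Fin ν ≃ Fin ν), (∀ s x, (x, π s x) ∈ Γ t) ∧
      ∀ s s' x, π s x = π s' x → s = s' := by
    intro t
    obtain ⟨h1, h2, h3, h4⟩ := hΓ t
    obtain ⟨F, hF, hF1, hF2⟩ := ore_factor rfl (Γ t) r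
      (ore_both (Γ t) ν (Fintype.card_fin ν) (Fintype.card_fin ν) (p / Λ) u (η₁ + δ + δ') hu hu2
        (by positivity) hηu (by positivity) hbig h1 h3 h2 h4 r hr)
    obtain ⟨π, hπ, hπ'⟩ := regular_matchings rfl r F hF1 hF2
    exact ⟨π, fun s x => hF (hπ s x), hπ'⟩
  choose π hπ hπ' using hmatch
  set C : Fin N × Fin r → Finset (Finset (Fin (ℓ * ν))) := fun z =>
    univ.image fun i => (P.PA i ∪ P.PB (π z.1 z.2 i)).image (σ' z.1).1 with hC
  have hdisj : ∀ z z', z ≠ z' → Disjoint (C z) (C z') := by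
    intro z z' hzz
    rw [disjoint_left]
    intro e he he'
    apply hzz
    obtain ⟨i, _, hi⟩ := mem_image.1 he
    obtain ⟨i', _, hi'⟩ := mem_image.1 he'
    obtain ⟨t, s⟩ := z
    obtain ⟨t', s'⟩ := z'
    simp only at hi hi'
    have htt : t = t' := hΓd t t' i _ i' _ (hπ t s i) (hπ t' s' i') (hi.trans hi'.symm)
    subst htt
    obtain ⟨rfl, h2⟩ := P.inj _ _ _ _ (image_injective (σ' t).1.injective (hi.trans hi'.symm))
    rw [hπ' t s s' i h2]
  have hnon : ∀ z, (C z).Nonempty := fun z =>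
    Finset.image_nonempty.2 ⟨⟨0, by omega⟩, mem_univ _⟩
  have hCinj : Function.Injective C := by
    intro z z' h
    by_contra hne
    have := hdisj z z' hne
    rw [h, disjoint_self] at this
    exact (hnon z').ne_empty this
  refine ⟨univ.image C, ?_, ?_, ?_⟩
  · rw [card_image_of_injective _ hCinj, card_univ, Fintype.card_prod, Fintype.card_fin,
      Fintype.card_fin, Nat.cast_mul]
    exact ht
  · intro c hc
    obtain ⟨z, _, rfl⟩ := mem_image.1 hc
    exact ham_of_matching hν hab ha hb hk H (σ' z.1).1 (π z.1 z.2) P hP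
      (fun i => hΓH z.1 i _ (hπ z.1 z.2 i))
  · intro c hc c' hc' hcc
    simp only [coe_image, coe_univ, Set.image_univ, Set.mem_range] at hc hc'
    obtain ⟨z, rfl⟩ := hc
    obtain ⟨z', rfl⟩ := hc'
    exact hdisj z z' fun h => hcc (by rw [h])


theorem exp_pow_bound (x X : ℝ) (m : ℕ) (hx : 0 < x) (hX : m * Real.log x ≤ X) :
    Real.exp (-X) * x ^ m ≤ 1 := by
  have h1 : x ^ m = Real.exp (m * Real.log x) := by
    rw [Real.exp_nat_mul, Real.exp_log hx]
  rw [h1, ← Real.exp_add]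
  rw [Real.exp_le_one_iff]
  linarith

theorem choose_sub_lower (n c : ℕ) : ∀ s, s ≤ n →
    n.choose (c + 1) ≤ (n - s).choose (c + 1) + s * (n - 1).choose c := by
  intro s
  induction s with
  | zero => intro _; simp
  | succ s ih =>
    intro hs
    have h := ih (by omega)
    have h1 : n - s = (n - (s + 1)) + 1 := by omega
    rw [h1, Nat.choose_succ_succ] at h
    have h2 : (n - (s + 1)).choose c ≤ (n - 1).choose c := Nat.choose_le_choose c (by omega)
    nlinarith

theorem choose_ratio (n c s : ℕ) (hc : 0 < c) (hs : s ≤ n) (hn : 0 < n) :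
    (1 - (s * c : ℝ) / n) * (n.choose c : ℝ) ≤ ((n - s).choose c : ℝ) := by
  obtain ⟨c, rfl⟩ : ∃ d, c = d + 1 := ⟨c - 1, by omega⟩
  obtain ⟨n, rfl⟩ : ∃ d, n = d + 1 := ⟨n - 1, by omega⟩
  have h := choose_sub_lower (n + 1) c s hs
  have h2 := Nat.add_one_mul_choose_eq n c
  have h3 : ((n : ℝ) + 1) * (n.choose c : ℝ) = ((n+1).choose (c+1) : ℝ) * ((c:ℝ) + 1) := by
    exact_mod_cast h2
  have h4 : ((n+1).choose (c+1) : ℝ) ≤ ((n + 1 - s).choose (c + 1) : ℝ) + s * (n.choose c : ℝ) := by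
    exact_mod_cast h
  have hn' : (0:ℝ) < (n:ℝ) + 1 := by positivity
  have h5 : (n.choose c : ℝ) = ((n+1).choose (c+1) : ℝ) * ((c:ℝ) + 1) / ((n:ℝ)+1) := by
    rw [eq_div_iff hn'.ne']; linarith
  rw [h5] at h4
  push_cast
  have : (1 - (s * ((c:ℝ) + 1) : ℝ) / ((n:ℝ)+1)) * ((n+1).choose (c+1) : ℝ) =
    ((n+1).choose (c+1) : ℝ) - s * (((n+1).choose (c+1) : ℝ) * ((c:ℝ) + 1) / ((n:ℝ)+1)) := by ring
  rw [this]; linarith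

theorem sq_le_choose {ℓ ν a b k : ℕ} (hν : 3 ≤ ν) (hab : a + b = ℓ) (ha : 0 < a)
    (hb : 0 < b) (hk : k = 2 * a + b) : ν ^ 2 ≤ (ℓ * ν).choose k := by
  classical
  have hNZ : NeZero ν := ⟨by omega⟩
  obtain ⟨P, hP⟩ : ∃ P, P = mkBlocks (grid ℓ ν) (nxt ν) (nxt_ne hν) (nxt_ne2 hν) hab ha hb :=
    ⟨_, rfl⟩
  have h1 : ((univ : Finset (Fin ν × Fin ν)).image fun s => P.PA s.1 ∪ P.PB s.2) ⊆
      powersetCard k (univ : Finset (Fin (ℓ * ν))) := by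
    intro e he
    obtain ⟨s, _, rfl⟩ := mem_image.1 he
    rw [mem_powersetCard]
    refine ⟨subset_univ _, ?_⟩
    rw [card_union_of_disjoint (P.disjAB _ _), P.cardA, P.cardB, hk]
  have h2 := card_le_card h1
  rw [card_image_of_injective, card_powersetCard, card_univ, card_univ, Fintype.card_prod,
    Fintype.card_fin, Fintype.card_fin] at h2
  · rw [pow_two]; exact h2
  · rintro ⟨i, j⟩ ⟨i', j'⟩ h
    obtain ⟨rfl, rfl⟩ := P.inj _ _ _ _ h
    rfl

set_option maxHeartbeats 8000000 in
/-- The numerical part: choice of all parameters. -/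
theorem packing_params {ℓ ν a b k : ℕ} (hν : 3 ≤ ν) (hab : a + b = ℓ) (ha : 0 < a)
    (hb : 0 < b) (hk : k = 2 * a + b) (H : Finset (Finset (Fin (ℓ * ν))))
    (p u η₁ x L C K : ℝ) (hx : x = ((ℓ * ν : ℕ) : ℝ)) (hL : L = Real.log x) (hL1 : 1 ≤ L)
    (hC : C = 5000 * (k + 1)) (hK : K = 10 ^ 8 * ℓ ^ 2 * C ^ 2 * (k + 3))
    (hx1 : 401 ≤ x) (hx2 : 2 * C * L ≤ x)
    (hp : 0 < p) (hp1 : p ≤ 1) (hpm : p = (H.card : ℝ) / ((ℓ * ν).choose k : ℝ))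
    (hu : 0 < u) (hu2 : u ≤ 1 / 2) (hη : η₁ = 1.002 * u ^ 3)
    (hW : K * L ^ 6 ≤ u ^ 30 * p ^ 4 * x)
    (hA : ∀ S : Finset (Fin (ℓ * ν)), S.card = 2 * a →
      (1 - η₁) * p * ((ℓ * ν).choose b : ℝ) ≤ hDeg (ℓ * ν) k H S)
    (hB : ∀ S : Finset (Fin (ℓ * ν)), S.card = b →
      (1 - η₁) * p * ((ℓ * ν).choose (2 * a) : ℝ) ≤ hDeg (ℓ * ν) k H S)
    (hA2 : ∀ S T : Finset (Fin (ℓ * ν)), S.card = 2 * a → T.card = 2 * a →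
      ((S ∩ T).card = 0 ∨ (S ∩ T).card = a) →
      ((hNbhd (ℓ * ν) k H S ∩ hNbhd (ℓ * ν) k H T).card : ℝ) ≤
        (1 + η₁) * p ^ 2 * ((ℓ * ν).choose b : ℝ))
    (hB2 : ∀ S T : Finset (Fin (ℓ * ν)), S.card = b → T.card = b → Disjoint S T →
      ((hNbhd (ℓ * ν) k H S ∩ hNbhd (ℓ * ν) k H T).card : ℝ) ≤
        (1 + η₁) * p ^ 2 * ((ℓ * ν).choose (2 * a) : ℝ)) :
    HamPackingGE (ℓ * ν) k ℓ H ((1 - 2 * u) * (H.card : ℝ) / (ν : ℝ)) := by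
  have hν0 : (0:ℝ) < ν := by exact_mod_cast (by omega : 0 < ν)
  have hℓ1 : (1:ℝ) ≤ ℓ := by exact_mod_cast (by omega : 1 ≤ ℓ)
  have hℓ0 : (0:ℝ) < ℓ := by linarith
  have hk0 : (0:ℝ) ≤ k := by positivity
  have hxν : x = ℓ * ν := by rw [hx]; push_cast; rfl
  have hx0 : 0 < x := by linarith
  have hL0 : 0 < L := by linarith
  have hC1 : 5000 ≤ C := by rw [hC]; linarith
  have hC0 : 0 < C := by linarith
  have hK0 : 0 < K := by rw [hK]; positivity
  have hu1 : u ≤ 1 := by linarith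
  have hcsq := sq_le_choose hν hab ha hb hk
  have hcn : (ℓ * ν).choose k ≤ (ℓ * ν) ^ k := Nat.choose_le_pow _ _
  have hcsq' : (ν:ℝ) ^ 2 ≤ ((ℓ * ν).choose k : ℝ) := by exact_mod_cast hcsq
  have hcn' : ((ℓ * ν).choose k : ℝ) ≤ x ^ k := by rw [hx]; exact_mod_cast hcn
  set c : ℝ := ((ℓ * ν).choose k : ℝ) with hc
  have hc0 : 0 < c := lt_of_lt_of_le (by positivity) hcsq'
  -- the main monotonicity
  have hWij : ∀ i j d : ℕ, i ≤ 30 → j ≤ 4 → d ≤ 6 → K * L ^ d ≤ u ^ i * p ^ j * x := by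
    intro i j d hi hj hd
    have h1 : u ^ 30 ≤ u ^ i := pow_le_pow_of_le_one hu.le hu1 hi
    have h2 : p ^ 4 ≤ p ^ j := pow_le_pow_of_le_one hp.le hp1 hj
    have h3 : L ^ d ≤ L ^ 6 := pow_le_pow_right₀ hL1 hd
    calc K * L ^ d ≤ K * L ^ 6 := by gcongr
      _ ≤ u ^ 30 * p ^ 4 * x := hW
      _ ≤ u ^ i * p ^ j * x := by gcongr
  have hK1 : 1 ≤ K := by
    rw [hK]
    have h1 : (1:ℝ) ≤ (ℓ:ℝ) ^ 2 := one_le_pow₀ hℓ1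
    have h2 : (1:ℝ) ≤ C ^ 2 := one_le_pow₀ (by linarith)
    have h3 : (1:ℝ) ≤ (k:ℝ) + 3 := by linarith
    calc (1:ℝ) = 1 * 1 * 1 * 1 := by norm_num
      _ ≤ 10 ^ 8 * ℓ ^ 2 * C ^ 2 * (k + 3) := by gcongr; norm_num
  have hux : 1 ≤ u ^ 2 * x := by
    have := hWij 2 0 0 (by norm_num) (by norm_num) (by norm_num)
    simp only [pow_zero, mul_one] at this
    linarith
  have husq : u ^ 2 ≤ u := by rw [sq]; exact mul_le_of_le_one_left hu.le hu1
  have hux1 : 1 ≤ u * x := hux.trans (mul_le_mul_of_nonneg_right husq hx0.le)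
  -- Λ
  obtain ⟨Λ, hΛ⟩ : ∃ Λ : ℕ, Λ = ⌈C * L / u ^ 2⌉₊ := ⟨_, rfl⟩
  have hΛlow : C * L / u ^ 2 ≤ Λ := by rw [hΛ]; exact Nat.le_ceil _
  have hCLu : 1 ≤ C * L / u ^ 2 := by
    rw [le_div_iff₀ (by positivity)]
    have e3 : 5000 * 1 ≤ C * L := by gcongr
    linarith
  have hΛup : (Λ:ℝ) ≤ 2 * C * L / u ^ 2 := by
    have h1 := (Nat.ceil_lt_add_one (by positivity : 0 ≤ C * L / u ^ 2)).le
    rw [← hΛ] at h1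
    have h2 : 2 * C * L / u ^ 2 = C * L / u ^ 2 + C * L / u ^ 2 := by ring
    rw [h2]; linarith
  have hΛ1 : (1:ℝ) ≤ Λ := hCLu.trans hΛlow
  have hΛ0 : (0:ℝ) < Λ := by linarith
  have hΛpos : 0 < Λ := by exact_mod_cast hΛ0
  have hΛL : C * L ≤ Λ * u ^ 2 := by rwa [div_le_iff₀ (by positivity)] at hΛlow
  have hΛU : Λ * u ^ 2 ≤ 2 * C * L := by rwa [le_div_iff₀ (by positivity)] at hΛup
  have hΛx : (Λ:ℝ) ≤ x ^ 2 := by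
    have h1 : (Λ:ℝ) * 1 ≤ Λ * (u ^ 2 * x) := by gcongr
    calc (Λ:ℝ) ≤ Λ * (u ^ 2 * x) := by linarith
      _ = (Λ * u ^ 2) * x := by ring
      _ ≤ x * x := mul_le_mul_of_nonneg_right (hΛU.trans hx2) hx0.le
      _ = x ^ 2 := by ring
  -- N
  obtain ⟨N, hN⟩ : ∃ N : ℕ, N = ⌊(1 - 0.04 * u) * Λ * (c / ν ^ 2)⌋₊ := ⟨_, rfl⟩
  have hcν : 1 ≤ c / (ν:ℝ) ^ 2 := by rw [le_div_iff₀ (by positivity)]; linarith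
  have h04 : 0 ≤ 1 - 0.04 * u := by linarith
  have hNup : (N:ℝ) ≤ (1 - 0.04 * u) * Λ * (c / ν ^ 2) := by
    rw [hN]; exact Nat.floor_le (by positivity)
  have hNlow : (1 - 0.05 * u) * Λ * (c / ν ^ 2) ≤ N := by
    have h1 := Nat.lt_floor_add_one ((1 - 0.04 * u) * Λ * (c / (ν:ℝ) ^ 2))
    rw [← hN] at h1
    have h2 : 1 ≤ 0.01 * u * Λ * (c / (ν:ℝ) ^ 2) := by
      have h3 : 1 ≤ 0.01 * u * Λ := by
        have e2 : Λ * u ^ 2 ≤ Λ * u := mul_le_mul_of_nonneg_left husq hΛ0.le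
        have e3 : 5000 * 1 ≤ C * L := by gcongr
        linarith
      calc (1:ℝ) = 1 * 1 := by norm_num
        _ ≤ 0.01 * u * Λ * (c / (ν:ℝ) ^ 2) := by gcongr
    linarith
  have hNν : (N:ℝ) * ν ^ 2 ≤ Λ * c := by
    have h1 : (N:ℝ) ≤ Λ * (c / ν ^ 2) := by
      refine hNup.trans ?_
      have : (0:ℝ) ≤ 0.04 * u * (Λ * (c / ν ^ 2)) := by positivity
      have e : (1 - 0.04 * u) * Λ * (c / ν ^ 2) =
        Λ * (c / ν ^ 2) - 0.04 * u * (Λ * (c / ν ^ 2)) := by ring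
      linarith
    calc (N:ℝ) * ν ^ 2 ≤ Λ * (c / ν ^ 2) * ν ^ 2 := by gcongr
      _ = Λ * c := by field_simp
  -- q
  set q : ℝ := p / Λ with hq
  have hq0 : 0 < q := by positivity
  have hqlow : p * u ^ 2 / (2 * C * L) ≤ q := by
    rw [hq, div_le_div_iff₀ (by positivity) hΛ0]
    calc p * u ^ 2 * Λ = p * (Λ * u ^ 2) := by ring
      _ ≤ p * (2 * C * L) := mul_le_mul_of_nonneg_left hΛU hp.le
  have hνx : (ν:ℝ) = x / ℓ := by rw [hxν]; field_simp
  have hqν : K / (2 * C * ℓ) * L ^ 5 ≤ u * q * ν := by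
    have h1 := hWij 3 1 6 (by norm_num) (by norm_num) (by norm_num)
    calc K / (2 * C * ℓ) * L ^ 5 = (K * L ^ 6) / (2 * C * L * ℓ) := by field_simp
      _ ≤ (u ^ 3 * p ^ 1 * x) / (2 * C * L * ℓ) := by gcongr
      _ = u * (p * u ^ 2 / (2 * C * L)) * (x / ℓ) := by field_simp
      _ ≤ u * q * (x / ℓ) := by gcongr
      _ = u * q * ν := by rw [hνx]
  have hq2 : K / (4 * C ^ 2 * ℓ) * L ^ 4 ≤ u ^ 6 * q ^ 2 * ν := by
    have h1 := hWij 10 2 6 (by norm_num) (by norm_num) (by norm_num)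
    calc K / (4 * C ^ 2 * ℓ) * L ^ 4 = (K * L ^ 6) / (4 * C ^ 2 * L ^ 2 * ℓ) := by field_simp
      _ ≤ (u ^ 10 * p ^ 2 * x) / (4 * C ^ 2 * L ^ 2 * ℓ) := by gcongr
      _ = u ^ 6 * (p * u ^ 2 / (2 * C * L)) ^ 2 * (x / ℓ) := by field_simp; ring
      _ ≤ u ^ 6 * q ^ 2 * (x / ℓ) := by gcongr
      _ = u ^ 6 * q ^ 2 * ν := by rw [hνx]
  have hKq : 10 ^ 7 * (k + 3) ≤ K / (4 * C ^ 2 * ℓ) := by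
    rw [le_div_iff₀ (by positivity), hK]
    have : 0 ≤ C ^ 2 * ℓ * ((k:ℝ) + 3) := by positivity
    have e1 := mul_le_mul_of_nonneg_left hℓ1 this
    have e2 : 0 ≤ C ^ 2 * ℓ * ((k:ℝ) + 3) * ℓ := by positivity
    linarith
  have hKq2 : 20 ≤ K / (2 * C * ℓ) := by
    have h1 : K / (2 * C * ℓ) = 2 * C * (K / (4 * C ^ 2 * ℓ)) := by field_simp; ring
    rw [h1]
    have e1 : 10 ≤ K / (4 * C ^ 2 * ℓ) := by linarith
    have e2 : 10000 * 10 ≤ 2 * C * (K / (4 * C ^ 2 * ℓ)) := by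
      apply mul_le_mul _ e1 (by norm_num) (by positivity)
      linarith
    linarith
  have hL4 : L ≤ L ^ 4 := by
    calc L = L ^ 1 := (pow_one L).symm
      _ ≤ L ^ 4 := pow_le_pow_right₀ hL1 (by norm_num)
  have hq2' : 10 ^ 7 * (k + 3) * L ≤ u ^ 6 * q ^ 2 * ν := by
    refine le_trans ?_ hq2
    gcongr
  -- r
  have h19 : 0 ≤ 1 - 1.9 * u := by linarith
  obtain ⟨r, hr⟩ : ∃ r : ℕ, r = ⌊(1 - 1.9 * u) * q * ν⌋₊ := ⟨_, rfl⟩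
  have hrup : (r:ℝ) ≤ (1 - 1.9 * u) * q * ν := by
    rw [hr]; exact Nat.floor_le (by positivity)
  have hrlow : (1 - 1.95 * u) * q * ν ≤ r := by
    have h1 := Nat.lt_floor_add_one ((1 - 1.9 * u) * q * ν)
    rw [← hr] at h1
    have h5 : (1:ℝ) ≤ L ^ 5 := one_le_pow₀ hL1
    have h2 : 20 ≤ u * q * ν := by
      refine le_trans ?_ hqν
      have e1 : (20:ℝ) * 1 ≤ K / (2 * C * ℓ) * L ^ 5 :=
        mul_le_mul hKq2 h5 (by norm_num) (by positivity)
      linarith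
    have e2 : (1 - 1.95 * u) * q * ν = (1 - 1.9 * u) * q * ν - 0.05 * (u * q * ν) := by ring
    linarith
  have htot : (1 - 2 * u) * (H.card : ℝ) / (ν : ℝ) ≤ N * r := by
    have h1 : (H.card : ℝ) = p * c := by
      rw [hpm, div_mul_cancel₀ _ hc0.ne']
    have h195 : 0 ≤ 1 - 1.95 * u := by linarith
    have h05 : 0 ≤ 1 - 0.05 * u := by linarith
    calc (1 - 2 * u) * (H.card : ℝ) / (ν : ℝ)
        ≤ ((1 - 0.05 * u) * (1 - 1.95 * u)) * (H.card : ℝ) / (ν : ℝ) := by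
          have e1 : 0 ≤ 0.0975 * u ^ 2 := by positivity
          have e2 : 1 - 2 * u ≤ (1 - 0.05 * u) * (1 - 1.95 * u) := by
            have e3 : (1 - 0.05 * u) * (1 - 1.95 * u) = 1 - 2 * u + 0.0975 * u ^ 2 := by ring
            linarith
          exact div_le_div_of_nonneg_right
            (mul_le_mul_of_nonneg_right e2 (Nat.cast_nonneg _)) hν0.le
      _ = ((1 - 0.05 * u) * Λ * (c / ν ^ 2)) * ((1 - 1.95 * u) * q * ν) := by
          rw [h1, hq]
          clear_value c q
          clear hpm hq hx hΛ hN hr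
          field_simp
      _ ≤ N * r := by gcongr
  -- put together
  have hδτ : (0:ℝ) < 0.002 * u ^ 3 * p ^ 2 * ν := by positivity
  refine packing_core (N := N) (Λ := Λ) (r := r) hν hab ha hb hk H hΛpos p u η₁ (0.002 * u ^ 3)
    (0.006 * u ^ 3) (0.002 * u ^ 3 * p ^ 2 * ν) (0.01 * u) (0.03 * u) hp hp1 (by positivity)
    (by positivity) (by rw [hη]; positivity) hu hu2 (by rw [hη]; linarith) hA hB hA2 hB2
    hδτ le_rfl (by linarith) ?_ (by positivity) (by linarith) ?_ ?_ ?_ ?_ hrup _ htot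
  · rw [← hx]
    have hX : ((2 * k + 2 : ℕ) : ℝ) * Real.log x ≤ (0.002 * u ^ 3 * p ^ 2 * ν) ^ 2 / (32 * x) := by
      rw [← hL]
      have h1 := hWij 6 4 1 (by norm_num) (by norm_num) (by norm_num)
      rw [pow_one] at h1
      have h2 : (0.002 * u ^ 3 * p ^ 2 * ν) ^ 2 / (32 * x) =
          0.000000125 / ℓ ^ 2 * (u ^ 6 * p ^ 4 * x) := by
        rw [hνx]; field_simp; norm_num
      rw [h2]
      have h3 : 0.000000125 / (ℓ:ℝ) ^ 2 * (K * L) ≤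
        0.000000125 / (ℓ:ℝ) ^ 2 * (u ^ 6 * p ^ 4 * x) := by gcongr
      refine le_trans ?_ h3
      have h4 : 0.000000125 / (ℓ:ℝ) ^ 2 * (K * L) = 12.5 * C ^ 2 * (k + 3) * L := by
        rw [hK]; field_simp; norm_num
      rw [h4]
      have h5 : (1:ℝ) ≤ C ^ 2 := one_le_pow₀ (by linarith)
      push_cast
      have e1 : 0 ≤ ((k:ℝ) + 3) := by linarith
      have e2 : 12.5 * 1 * ((k:ℝ) + 3) ≤ 12.5 * C ^ 2 * (k + 3) := by gcongr
      refine mul_le_mul_of_nonneg_right ?_ hL0.le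
      linarith
    have h1 := exp_pow_bound x _ (2 * k + 2) hx0 hX
    set Y := Real.exp (-((0.002 * u ^ 3 * p ^ 2 * ν) ^ 2 / (32 * x))) with hY
    have hY0 : 0 < Y := Real.exp_pos _
    have h2 : x ^ (2 * k + 2) = x ^ (2 * k) * x ^ 2 := by rw [pow_add]
    rw [h2] at h1
    have hZ : 0 < x ^ (2 * k) * Y := by positivity
    have h3 : x ^ (2 * k) * Y * x ^ 2 ≤ 1 := by linarith
    -- multiply by x
    have h6 : 400 * (x ^ (2 * k) * Y) * x ≤ u * x := by
      refine le_trans ?_ hux1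
      have e1 : 0 ≤ x ^ (2 * k) * Y * x := mul_nonneg hZ.le hx0.le
      have e2 : x ^ (2 * k) * Y * x * 401 ≤ x ^ (2 * k) * Y * x * x :=
        mul_le_mul_of_nonneg_left hx1 e1
      have e3 : x ^ (2 * k) * Y * x ^ 2 = x ^ (2 * k) * Y * x * x := by ring
      linarith
    have h7 := le_of_mul_le_mul_right h6 hx0
    linarith
  · calc (N:ℝ) * ((ν:ℝ) ^ 2 / c) ≤ (1 - 0.04 * u) * Λ * (c / ν ^ 2) * ((ν:ℝ) ^ 2 / c) := by gcongr
      _ = (1 - 0.04 * u) * Λ := by field_simp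
      _ ≤ (1 - 0.03 * u) * (1 - 0.01 * u) * Λ := by
          have e1 : 0 ≤ 0.0003 * u ^ 2 := by positivity
          have e3 : (1 - 0.03 * u) * (1 - 0.01 * u) = 1 - 0.04 * u + 0.0003 * u ^ 2 := by ring
          exact mul_le_mul_of_nonneg_right (by linarith) hΛ0.le
  · have hX : ((k + 1 : ℕ) : ℝ) * Real.log x ≤ (0.03 * u) ^ 2 * Λ / 4 := by
      rw [← hL]
      push_cast
      have : (0.03 * u) ^ 2 * Λ / 4 = 0.000225 * (Λ * u ^ 2) := by ring
      rw [this]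
      have h2 : C * L = 5000 * (((k:ℝ) + 1) * L) := by rw [hC]; ring
      have h3 : 0 ≤ ((k:ℝ) + 1) * L := by positivity
      linarith
    have h1 := exp_pow_bound x _ (k + 1) hx0 hX
    set Y := Real.exp (-((0.03 * u) ^ 2 * Λ / 4)) with hY
    have hY0 : 0 < Y := Real.exp_pos _
    have h2 : c * Y ≤ x ^ k * Y := by gcongr
    have h3 : 0 < x ^ k * Y := by positivity
    have h4 : x ^ k * Y * x ≤ 1 := by rw [pow_succ] at h1; linarith
    have e1 := mul_le_mul_of_nonneg_left hx1 h3.le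
    linarith
  · have hX : ((k + 3 : ℕ) : ℝ) * Real.log x ≤ (0.006 * u ^ 3) ^ 2 * (q ^ 2 * ν) / 8 := by
      rw [← hL]
      push_cast
      have : (0.006 * u ^ 3) ^ 2 * (q ^ 2 * ν) / 8 = 0.0000045 * (u ^ 6 * q ^ 2 * ν) := by ring
      rw [this]
      have h3 : 0 ≤ ((k:ℝ) + 3) * L := by positivity
      linarith
    have h1 := exp_pow_bound x _ (k + 3) hx0 hX
    set Y := Real.exp (-((0.006 * u ^ 3) ^ 2 * (q ^ 2 * ν) / 8)) with hY
    have hY0 : 0 < Y := Real.exp_pos _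
    have h2 : 4 * ((N:ℝ) * ν ^ 2) * Y ≤ 4 * (x ^ 2 * x ^ k) * Y := by
      have : (N:ℝ) * ν ^ 2 ≤ x ^ 2 * x ^ k := hNν.trans (by gcongr)
      gcongr
    have h3 : 0 < x ^ 2 * x ^ k * Y := by positivity
    have h4 : x ^ 2 * x ^ k * Y * x ≤ 1 := by
      refine le_trans (le_of_eq ?_) h1
      ring
    have e1 := mul_le_mul_of_nonneg_left hx1 h3.le
    linarith
  · have h1 : 0.07 * u ^ 6 * q ^ 2 * ν ≤ 0.07 * u ^ 4 * q ^ 2 * ν := by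
      have : u ^ 6 ≤ u ^ 4 := pow_le_pow_of_le_one hu.le hu1 (by norm_num)
      gcongr
    have h3 : 3 * 1 ≤ ((k:ℝ) + 3) * L := by gcongr; linarith
    linarith


/-- One value of `j`: from the properties with parameter `ε` to the packing. -/
theorem packing_at {k ℓ j : ℕ} (hkl : k < 2 * ℓ) (hlk : ℓ < k) (hj : 3 ≤ j)
    (H : Finset (Finset (Fin (ℓ * j)))) (huniform : ∀ e ∈ H, e.card = k)
    (p : ℝ) (hp : p = (H.card : ℝ) / (((ℓ * j).choose k : ℕ) : ℝ))
    (ε : ℝ) (x L C K : ℝ) (hx : x = ((ℓ * j : ℕ) : ℝ)) (hL : L = Real.log x) (hL1 : 1 ≤ L)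
    (hC : C = 5000 * (k + 1)) (hK : K = 10 ^ 8 * ℓ ^ 2 * C ^ 2 * (k + 3))
    (hx1 : 401 ≤ x) (hx2 : 2 * C * L ≤ x)
    (hlim : K ≤ ε ^ 5 * Real.sqrt x * p ^ 2 / L ^ 3)
    (hPa : ∀ S : Finset (Fin (ℓ * j)), S.card = 2 * (k - ℓ) →
      Nat.ceil ((1 - ε) * (((ℓ * j - 2 * (k - ℓ)).choose (2 * ℓ - k) : ℕ) : ℝ) * p)
        ≤ hDeg (ℓ * j) k H S)
    (hPb : ∀ S : Finset (Fin (ℓ * j)), S.card = 2 * ℓ - k →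
      Nat.ceil ((1 - ε) * (((ℓ * j - (2 * ℓ - k)).choose (2 * (k - ℓ)) : ℕ) : ℝ) * p)
        ≤ hDeg (ℓ * j) k H S)
    (hPe : ∀ S₁ S₂ : Finset (Fin (ℓ * j)),
      S₁.card = 2 * ℓ - k → S₂.card = 2 * ℓ - k → Disjoint S₁ S₂ →
      (hNbhd (ℓ * j) k H S₁ ∩ hNbhd (ℓ * j) k H S₂).card
        ≤ Nat.floor ((1 + ε) * (((ℓ * j - 2 * (2 * ℓ - k)).choose (2 * (k - ℓ)) : ℕ) : ℝ) * p ^ 2))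
    (hPf : ∀ S₁ S₂ : Finset (Fin (ℓ * j)),
      S₁.card = 2 * (k - ℓ) → S₂.card = 2 * (k - ℓ) →
      ((S₁ ∩ S₂).card = 0 ∨ (S₁ ∩ S₂).card = k - ℓ) →
      (hNbhd (ℓ * j) k H S₁ ∩ hNbhd (ℓ * j) k H S₂).card
        ≤ Nat.floor ((1 + ε) * (((ℓ * j).choose (2 * ℓ - k) : ℕ) : ℝ) * p ^ 2)) :
    HamPackingGE (ℓ * j) k ℓ H
        ((1 - 2 * ε ^ ((1 : ℝ) / 3)) * (H.card : ℝ) / (j : ℝ)) := by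
  obtain ⟨a, ha⟩ : ∃ a, a = k - ℓ := ⟨_, rfl⟩
  obtain ⟨b, hb⟩ : ∃ b, b = 2 * ℓ - k := ⟨_, rfl⟩
  rw [← ha, ← hb] at hPa hPb hPe hPf
  have ha0 : 0 < a := by omega
  have hb0 : 0 < b := by omega
  have hab : a + b = ℓ := by omega
  have hk : k = 2 * a + b := by omega
  have hx0 : 0 < x := by linarith
  have hL0 : 0 < L := by linarith
  have hℓ1 : (1:ℝ) ≤ ℓ := by exact_mod_cast (by omega : 1 ≤ ℓ)
  have hk1 : (1:ℝ) ≤ k := by exact_mod_cast (by omega : 1 ≤ k)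
  have hC1 : 5000 * (k:ℝ) ≤ C := by rw [hC]; linarith
  have hKk : 10 ^ 8 * (k:ℝ) ^ 2 ≤ K := by
    have h1 : (1:ℝ) ≤ (ℓ:ℝ) ^ 2 := one_le_pow₀ hℓ1
    have h2 : (k:ℝ) ^ 2 ≤ C ^ 2 := by gcongr; linarith
    have h3 : (1:ℝ) ≤ (k:ℝ) + 3 := by linarith
    rw [hK]
    calc 10 ^ 8 * (k:ℝ) ^ 2 = 10 ^ 8 * 1 * k ^ 2 * 1 := by ring
      _ ≤ _ := by gcongr
  have hkk : (1:ℝ) ≤ (k:ℝ) ^ 2 := one_le_pow₀ hk1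
  have hK1 : 1 ≤ K := by linarith
  -- positivity of ε and p
  have hprod : K * L ^ 3 ≤ ε ^ 5 * Real.sqrt x * p ^ 2 := by
    rwa [le_div_iff₀ (by positivity)] at hlim
  have hpos : 0 < ε ^ 5 * Real.sqrt x * p ^ 2 := lt_of_lt_of_le (by positivity) hprod
  have hpne : p ≠ 0 := by
    rintro rfl
    simp at hpos
  have hp0 : 0 ≤ p := by rw [hp]; exact div_nonneg (Nat.cast_nonneg _) (Nat.cast_nonneg _)
  have hpp : 0 < p := lt_of_le_of_ne hp0 hpne.symm
  have hε0 : 0 < ε := by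
    by_contra hne
    have h1 : ε ^ 5 ≤ 0 := (Odd.pow_nonpos_iff (by decide)).2 (not_lt.1 hne)
    have h2 : ε ^ 5 * Real.sqrt x * p ^ 2 ≤ 0 :=
      mul_nonpos_of_nonpos_of_nonneg (mul_nonpos_of_nonpos_of_nonneg h1 (Real.sqrt_nonneg _))
        (by positivity)
    linarith
  have hp1 : p ≤ 1 := by
    rw [hp]
    apply div_le_one_of_le₀ _ (by positivity)
    have h1 : H ⊆ powersetCard k (univ : Finset (Fin (ℓ * j))) := by
      intro e he
      rw [mem_powersetCard]
      exact ⟨subset_univ _, huniform e he⟩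
    have h2 := card_le_card h1
    rw [card_powersetCard, card_univ, Fintype.card_fin] at h2
    exact_mod_cast h2
  have hsq : K * L ^ 6 ≤ ε ^ 10 * p ^ 4 * x := by
    have h1 : (K * L ^ 3) ^ 2 ≤ (ε ^ 5 * Real.sqrt x * p ^ 2) ^ 2 := by gcongr
    have h2 : (ε ^ 5 * Real.sqrt x * p ^ 2) ^ 2 = ε ^ 10 * p ^ 4 * x := by
      have := Real.sq_sqrt hx0.le
      calc _ = ε ^ 10 * p ^ 4 * (Real.sqrt x) ^ 2 := by ring
        _ = _ := by rw [this]
    have h3 : K * L ^ 6 ≤ K * K * L ^ 6 := by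
      refine mul_le_mul_of_nonneg_right ?_ (by positivity)
      exact le_mul_of_one_le_left (by linarith) hK1
    calc K * L ^ 6 ≤ K * K * L ^ 6 := h3
      _ = (K * L ^ 3) ^ 2 := by ring
      _ ≤ _ := h1
      _ = _ := h2
  obtain ⟨u, hu⟩ : ∃ u, u = ε ^ ((1:ℝ) / 3) := ⟨_, rfl⟩
  rw [← hu]
  have hu0 : 0 < u := by rw [hu]; exact Real.rpow_pos_of_pos hε0 _
  have hu3 : u ^ 3 = ε := by
    rw [hu, ← Real.rpow_natCast, ← Real.rpow_mul hε0.le]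
    norm_num
  rcases le_or_gt u (1/2) with hu2 | hu2
  swap
  · refine ⟨∅, ?_, by simp, by simp⟩
    have h1 : (1 - 2 * u) * (H.card : ℝ) ≤ 0 :=
      mul_nonpos_of_nonpos_of_nonneg (by linarith) (Nat.cast_nonneg _)
    have h2 := div_nonpos_of_nonpos_of_nonneg h1 (Nat.cast_nonneg j)
    simpa using h2
  have hε8 : ε ≤ 1 := by
    rw [← hu3]
    exact pow_le_one₀ hu0.le (by linarith)
  -- the loss coming from the binomial coefficients
  have hεx : 1000 * (k:ℝ) ^ 2 ≤ ε * x := by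
    have h1 : ε ^ 10 * p ^ 4 * x ≤ ε * 1 * x := by
      have e1 : ε ^ 10 ≤ ε := by
        calc ε ^ 10 ≤ ε ^ 1 := pow_le_pow_of_le_one hε0.le hε8 (by norm_num)
          _ = ε := pow_one _
      have e2 : p ^ 4 ≤ 1 := pow_le_one₀ hp0 hp1
      gcongr
    have h2 : K * 1 ≤ K * L ^ 6 := by
      gcongr
      exact one_le_pow₀ hL1
    linarith
  have hnat : k ^ 2 ≤ ℓ * j := by
    have : (k:ℝ) ^ 2 ≤ x := by
      have : ε * x ≤ 1 * x := by gcongr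
      linarith
    rw [hx] at this
    exact_mod_cast this
  have hkn : k ≤ ℓ * j := le_trans (by nlinarith) hnat
  have hlow : ∀ s c : ℕ, 0 < c → s ≤ k → c ≤ k →
      (1 - 1.002 * ε) * p * ((ℓ * j).choose c : ℝ) ≤ (1 - ε) * ((ℓ * j - s).choose c : ℝ) * p := by
    intro s c hc hs hck
    have h1 := choose_ratio (ℓ * j) c s hc (hs.trans hkn) (by omega)
    rw [← hx] at h1
    have h2 : (s * c : ℝ) / x ≤ 0.001 * ε := by
      rw [div_le_iff₀ hx0]
      have : (s * c : ℝ) ≤ k ^ 2 := by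
        rw [sq]
        gcongr
      linarith
    set X : ℝ := ((ℓ * j).choose c : ℝ)
    have hX : 0 ≤ X := Nat.cast_nonneg _
    have h3 : (1 - 0.001 * ε) * X ≤ ((ℓ * j - s).choose c : ℝ) := by
      refine le_trans ?_ h1
      gcongr
    have h4 : (1 - 1.002 * ε) * X ≤ (1 - ε) * ((ℓ * j - s).choose c : ℝ) := by
      calc (1 - 1.002 * ε) * X ≤ ((1 - ε) * (1 - 0.001 * ε)) * X := by
            refine mul_le_mul_of_nonneg_right ?_ hX
            have e1 : 0 ≤ ε ^ 2 := by positivity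
            have e2 : (1 - ε) * (1 - 0.001 * ε) = 1 - 1.001 * ε + 0.001 * ε ^ 2 := by ring
            linarith
        _ = (1 - ε) * ((1 - 0.001 * ε) * X) := by ring
        _ ≤ _ := mul_le_mul_of_nonneg_left h3 (by linarith)
    calc _ = ((1 - 1.002 * ε) * X) * p := by ring
      _ ≤ _ := mul_le_mul_of_nonneg_right h4 hp0
  refine packing_params hj hab ha0 hb0 hk H p u (1.002 * ε) x L C K hx hL hL1 hC hK hx1 hx2 hpp hp1
    hp hu0 hu2 (by rw [hu3]) ?_ ?_ ?_ ?_ ?_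
  · have : u ^ 30 = ε ^ 10 := by rw [← hu3]; ring
    rw [this]; exact hsq
  · intro S hS
    refine (hlow (2 * a) b hb0 (by omega) (by omega)).trans ?_
    exact (Nat.le_ceil _).trans (by exact_mod_cast hPa S hS)
  · intro S hS
    refine (hlow b (2 * a) (by omega) (by omega) (by omega)).trans ?_
    exact (Nat.le_ceil _).trans (by exact_mod_cast hPb S hS)
  · intro S T hS hT hST
    have h1 : ((hNbhd (ℓ * j) k H S ∩ hNbhd (ℓ * j) k H T).card : ℝ) ≤ _ :=
      (Nat.cast_le.2 (hPf S T hS hT hST)).trans (Nat.floor_le (by positivity))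
    refine h1.trans ?_
    have e : (1 + 1.002 * ε) * p ^ 2 * ((ℓ * j).choose b : ℝ) =
      (1 + 1.002 * ε) * ((ℓ * j).choose b : ℝ) * p ^ 2 := by ring
    rw [e]
    gcongr
    linarith
  · intro S T hS hT hST
    have h1 : ((hNbhd (ℓ * j) k H S ∩ hNbhd (ℓ * j) k H T).card : ℝ) ≤ _ :=
      (Nat.cast_le.2 (hPe S T hS hT hST)).trans (Nat.floor_le (by positivity))
    refine h1.trans ?_
    have e : (1 + 1.002 * ε) * p ^ 2 * ((ℓ * j).choose (2 * a) : ℝ) =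
      (1 + 1.002 * ε) * ((ℓ * j).choose (2 * a) : ℝ) * p ^ 2 := by ring
    rw [e]
    have e2 : ((ℓ * j - 2 * b).choose (2 * a) : ℝ) ≤ ((ℓ * j).choose (2 * a) : ℝ) := by
      exact_mod_cast Nat.choose_le_choose (2 * a) (Nat.sub_le _ _)
    gcongr
    linarith

/-- Theorem 3 of the paper: let `k/2 < ℓ < k`, `ℓ ∣ n` (we write `n = ℓ j`),
let `H` be a `k`-uniform hypergraph on `[n]` with `m` edges and density `p = m/C(n,k)`, and
let `ε < 1` with `ε⁵ n^{1/2} p²/log³ n → ∞`.  If `H` satisfies `P_a, …, P_f`, then (for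
all large `n`) `H` contains at least `(1 - 2ε^{1/3}) m/ν_ℓ` pairwise edge-disjoint type-`ℓ`
Hamilton cycles, `ν_ℓ = n/ℓ = j`. -/
theorem stmt_2 (k ℓ : ℕ) (hkl : k < 2 * ℓ) (hlk : ℓ < k)
    (H : ∀ j : ℕ, Finset (Finset (Fin (ℓ * j))))
    (huniform : ∀ j, ∀ e ∈ H j, e.card = k)
    (p : ℕ → ℝ) (hp : ∀ j, p j = ((H j).card : ℝ) / (((ℓ * j).choose k : ℕ) : ℝ))
    (ε : ℕ → ℝ) (hε1 : ∀ j, ε j < 1)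
    (hεlim : Tendsto
      (fun j => (ε j) ^ 5 * Real.sqrt ((ℓ * j : ℕ) : ℝ) * (p j) ^ 2
                  / (Real.log ((ℓ * j : ℕ) : ℝ)) ^ 3) atTop atTop)
    (hPa : ∀ j, ∀ S : Finset (Fin (ℓ * j)), S.card = 2 * (k - ℓ) →
      Nat.ceil ((1 - ε j) * (((ℓ * j - 2 * (k - ℓ)).choose (2 * ℓ - k) : ℕ) : ℝ) * p j)
        ≤ hDeg (ℓ * j) k (H j) S)
    (hPb : ∀ j, ∀ S : Finset (Fin (ℓ * j)), S.card = 2 * ℓ - k →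
      Nat.ceil ((1 - ε j) * (((ℓ * j - (2 * ℓ - k)).choose (2 * (k - ℓ)) : ℕ) : ℝ) * p j)
        ≤ hDeg (ℓ * j) k (H j) S)
    (hPc : ∀ j, ∀ S : Finset (Fin (ℓ * j)), S.card = 2 * (k - ℓ) + 1 →
      hDeg (ℓ * j) k (H j) S
        ≤ Nat.floor ((1 + ε j) * (((ℓ * j - (2 * k - 2 * ℓ + 1)).choose (2 * ℓ - k - 1) : ℕ) : ℝ) * p j))
    (hPd : ∀ j, ∀ S : Finset (Fin (ℓ * j)), S.card = 2 * ℓ - k + 1 →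
      hDeg (ℓ * j) k (H j) S
        ≤ Nat.floor ((1 + ε j) * (((ℓ * j - (2 * ℓ - k + 1)).choose (2 * (k - ℓ) - 1) : ℕ) : ℝ) * p j))
    (hPe : ∀ j, ∀ S₁ S₂ : Finset (Fin (ℓ * j)),
      S₁.card = 2 * ℓ - k → S₂.card = 2 * ℓ - k → Disjoint S₁ S₂ →
      (hNbhd (ℓ * j) k (H j) S₁ ∩ hNbhd (ℓ * j) k (H j) S₂).card
        ≤ Nat.floor ((1 + ε j) * (((ℓ * j - 2 * (2 * ℓ - k)).choose (2 * (k - ℓ)) : ℕ) : ℝ) * (p j) ^ 2))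
    (hPf : ∀ j, ∀ S₁ S₂ : Finset (Fin (ℓ * j)),
      S₁.card = 2 * (k - ℓ) → S₂.card = 2 * (k - ℓ) →
      ((S₁ ∩ S₂).card = 0 ∨ (S₁ ∩ S₂).card = k - ℓ) →
      (hNbhd (ℓ * j) k (H j) S₁ ∩ hNbhd (ℓ * j) k (H j) S₂).card
        ≤ Nat.floor ((1 + ε j) * (((ℓ * j).choose (2 * ℓ - k) : ℕ) : ℝ) * (p j) ^ 2)) :
    ∀ᶠ j in atTop,
      HamPackingGE (ℓ * j) k ℓ (H j)
        ((1 - 2 * (ε j) ^ ((1 : ℝ) / 3)) * ((H j).card : ℝ) / (j : ℝ)) := by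
  obtain ⟨C, hC⟩ : ∃ C : ℝ, C = 5000 * (k + 1) := ⟨_, rfl⟩
  obtain ⟨K, hK⟩ : ∃ K : ℝ, K = 10 ^ 8 * ℓ ^ 2 * C ^ 2 * (k + 3) := ⟨_, rfl⟩
  have hx : Tendsto (fun j : ℕ => ((ℓ * j : ℕ) : ℝ)) atTop atTop := by
    apply tendsto_natCast_atTop_atTop.comp
    refine tendsto_atTop_mono (fun j => ?_) tendsto_id
    exact Nat.le_mul_of_pos_left j (by omega)
  have hC0 : 0 < C := by rw [hC]; positivity
  have hlog : ∀ᶠ y : ℝ in atTop, 2 * C * Real.log y ≤ y := by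
    have h := Real.isLittleO_log_id_atTop.bound (c := 1 / (2 * C)) (by positivity)
    filter_upwards [h, eventually_ge_atTop (0:ℝ)] with y hy hy0
    simp only [id, Real.norm_eq_abs, abs_of_nonneg hy0] at hy
    have h2 : Real.log y ≤ 1 / (2 * C) * y := (le_abs_self _).trans hy
    calc 2 * C * Real.log y ≤ 2 * C * (1 / (2 * C) * y) := by gcongr
      _ = y := by field_simp
  filter_upwards [eventually_ge_atTop 3, hx.eventually hlog,
    hx.eventually (eventually_ge_atTop 401),
    (Real.tendsto_log_atTop.comp hx).eventually (eventually_ge_atTop 1),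
    hεlim.eventually (eventually_ge_atTop K)] with j hj h1 h2 h3 h4
  exact packing_at hkl hlk hj (H j) (huniform j) (p j) (hp j) (ε j) _ _ C K rfl rfl h3 hC hK h2 h1
    h4 (hPa j) (hPb j) (hPe j) (hPf j)
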